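/- arXiv:1511.00478 — 2 statements merged into one kernel-verified Lean document; each statement's English description precedes it below -/
import Mathlib

section
/- Let n be a positive integer and write 8n+9 = 3^β·n₁ with n₁ a positive integer not divisible by 3. Then t(1,1,3,4;n) = (1/2)·(3^(β+1)·(3/n₁) − 1)·Σ_{d | n₁} d·(3/d) − Σ (−1)^((a−1)/2)·a, where (3/·) is the Kronecker symbol and the last sum is over all pairs (a,b) of positive integers with a odd and 4(8n+9) = a² + 3b². -/
/-!
Write `M = 8n + 9`, let `χ₃`, `χ₄` be the nontrivial characters modulo 3 and 4 and `χ₁₂ = χ₃ χ₄`.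

**Counting.** Completing squares turns `t(1,1,3,4;n)` into the number of solutions of
`M = u² + 3v² + 2(s² + t²)` with `s² + t²` odd. The numbers of representations of an odd integer by
`x² + y²` and `x² + 3y²` are `4 ∑ χ₄(d)` and `2 ∑ χ₃(d)` (`card_reps_one`, `card_reps_three`, proved by
comparing Hecke recursions at each odd prime). Hence `t(1,1,3,4;n)` equals `8 ∑ χ₃(a) χ₄(b)` over
positive solutions of `a x + b y = M` with `b` odd and `y ≡ 2 mod 4` (`tquad_eq_quadSum`).

**Eisenstein part.** An elementary identity in the style of Liouville (`liouville`) expresses certain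
sums over `a x + b y = M` by sums over the factorisations of `M`. Applied to a kernel depending on
residues modulo 8, it evaluates twice the sum above plus a companion sum over `b ≡ 2 mod 4`,
`4 ∣ y` as the divisor sum `∑_{ex = M} e (3 χ₁₂(x) - χ₁₂(e))`, up to a multiple of `∑ χ₃(d)`
(`main_identity`).

**Cuspidal part.** The companion sum is evaluated by a second elementary identity, of the kind used by
Uspensky. On the solutions of `x² + 4AC = m` with `A, C > 0`, two involutions act on the regions
`A + x > C` and `A + x < C`, and a function antisymmetric under both sums to its contribution from
`A + x = C`, where `m` is a square (`uspensky`). Taking `m = M - 3v²` and summing over `v` shows that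
the companion sum is, up to the same multiple of `∑ χ₃(d)`, the theta sum `∑ χ₄(u) u` over
`M = u² + 3v²` (`thetaU_eq`). The substitution `(u - 3v, u + v)` identifies this theta sum with twice
the sum over `4M = a² + 3b²` in the statement (`thetaU_eq_posPairs`).

Together, `2 t(1,1,3,4;n) = ∑_{ex = M} e (3 χ₁₂(x) - χ₁₂(e)) - ∑ χ₄(u) u` (`two_tquad`), and the
divisor sum factors through the prime-to-3 part of `M` (`eisenstein_sum`), where `χ₁₂(d) = (3/d)`.
-/


open scoped BigOperators

/-- `Nquad a b c d n` is the number of quadruples `(x,y,z,w) ∈ ℤ⁴` with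
`n = a*x^2 + b*y^2 + c*z^2 + d*w^2`. -/
noncomputable def Nquad (a b c d : ℕ) (n : ℕ) : ℕ :=
  Nat.card {p : ℤ × ℤ × ℤ × ℤ //
    (n : ℤ) = a * p.1 ^ 2 + b * p.2.1 ^ 2 + c * p.2.2.1 ^ 2 + d * p.2.2.2 ^ 2}

/-- `tquad a b c d n` is the number of quadruples `(x,y,z,w) ∈ ℤ⁴` with
`n = a*x(x-1)/2 + b*y(y-1)/2 + c*z(z-1)/2 + d*w(w-1)/2`. -/
noncomputable def tquad (a b c d : ℕ) (n : ℕ) : ℕ :=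
  Nat.card {p : ℤ × ℤ × ℤ × ℤ //
    (n : ℤ) = a * (p.1 * (p.1 - 1) / 2) + b * (p.2.1 * (p.2.1 - 1) / 2)
      + c * (p.2.2.1 * (p.2.2.1 - 1) / 2) + d * (p.2.2.2 * (p.2.2.2 - 1) / 2)}

open Finset

/-! ### Liouville sums over `a x + b y = M` -/

/-- The quadruples `(a, x, b, y)` of positive integers with `a x + b y = M`. -/
def quads (M : ℕ) : Finset (ℕ × ℕ × ℕ × ℕ) :=
  (range (M + 1) ×ˢ range (M + 1) ×ˢ range (M + 1) ×ˢ range (M + 1)).filter fun v =>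
    0 < v.1 ∧ 0 < v.2.1 ∧ 0 < v.2.2.1 ∧ 0 < v.2.2.2 ∧ v.1 * v.2.1 + v.2.2.1 * v.2.2.2 = M

lemma mem_quads {M a x b y : ℕ} : (a, x, b, y) ∈ quads M ↔
    0 < a ∧ 0 < x ∧ 0 < b ∧ 0 < y ∧ a * x + b * y = M := by
  simp only [quads, mem_filter, mem_product, mem_range]
  refine ⟨fun h => h.2, fun h => ⟨?_, h⟩⟩
  obtain ⟨ha, hx, hb, hy, e⟩ := h
  refine ⟨?_, ?_, ?_, ?_⟩ <;> nlinarith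

/-- The sum of `h a x b y` over all positive solutions of `a x + b y = M`. -/
def quadSum (M : ℕ) (h : ℤ → ℤ → ℤ → ℤ → ℤ) : ℤ :=
  ∑ v ∈ quads M, h v.1 v.2.1 v.2.2.1 v.2.2.2

/-- The part of `quadSum` with `y < x`. -/
def upperSum (M : ℕ) (h : ℤ → ℤ → ℤ → ℤ → ℤ) : ℤ :=
  ∑ v ∈ (quads M).filter (fun v => v.2.2.2 < v.2.1), h v.1 v.2.1 v.2.2.1 v.2.2.2

/-- The part of `quadSum` with `x = y`. -/
def diagSum (M : ℕ) (h : ℤ → ℤ → ℤ → ℤ → ℤ) : ℤ :=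
  ∑ v ∈ (quads M).filter (fun v => v.2.1 = v.2.2.2), h v.1 v.2.1 v.2.2.1 v.2.2.2

lemma quadSum_alpha (M : ℕ) (h : ℤ → ℤ → ℤ → ℤ → ℤ) :
    quadSum M h = quadSum M (fun a x b y => h x a b y) := by
  refine sum_nbij' (fun v => (v.2.1, v.1, v.2.2)) (fun v => (v.2.1, v.1, v.2.2)) ?_ ?_ ?_ ?_ ?_
  all_goals rintro ⟨a, x, b, y⟩ hv
  all_goals first | rfl | skip
  all_goals
    simp only [mem_quads] at hv ⊢
    obtain ⟨ha, hx, hb, hy, e⟩ := hv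
    exact ⟨hx, ha, hb, hy, by rw [← e]; ring⟩

lemma quadSum_sigma (M : ℕ) (h : ℤ → ℤ → ℤ → ℤ → ℤ) :
    quadSum M h = quadSum M (fun a x b y => h b y a x) := by
  refine sum_nbij' (fun v => (v.2.2.1, v.2.2.2, v.1, v.2.1))
    (fun v => (v.2.2.1, v.2.2.2, v.1, v.2.1)) ?_ ?_ ?_ ?_ ?_
  all_goals rintro ⟨a, x, b, y⟩ hv
  all_goals first | rfl | skip
  all_goals
    simp only [mem_quads] at hv ⊢
    obtain ⟨ha, hx, hb, hy, e⟩ := hv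
    exact ⟨hb, hy, ha, hx, by rw [← e]; ring⟩

lemma quadSum_beta (M : ℕ) (h : ℤ → ℤ → ℤ → ℤ → ℤ) :
    quadSum M h = quadSum M (fun a x b y => h a x y b) := by
  rw [quadSum_sigma, quadSum_alpha, quadSum_sigma]

/-- The map `(a, x, b, y) ↦ (y, a + b, x - y, a)` is an involution of the solutions of
`a x + b y = M` with `y < x`. -/
lemma upperSum_tau (M : ℕ) (h : ℤ → ℤ → ℤ → ℤ → ℤ) :
    upperSum M h = upperSum M (fun a x b y => h y (a + b) (x - y) a) := by
  refine sum_nbij' (fun v => (v.2.2.2, v.1 + v.2.2.1, v.2.1 - v.2.2.2, v.1))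
    (fun v => (v.2.2.2, v.1 + v.2.2.1, v.2.1 - v.2.2.2, v.1)) ?_ ?_ ?_ ?_ ?_
  all_goals
    rintro ⟨a, x, b, y⟩ hv
    simp only [mem_filter, mem_quads] at hv
    obtain ⟨⟨ha, hx, hb, hy, e⟩, hxy⟩ := hv
    obtain ⟨t, rfl⟩ := Nat.exists_eq_add_of_lt hxy
  · simp only [mem_filter, mem_quads]
    refine ⟨⟨hy, by omega, by omega, ha, ?_⟩, by omega⟩
    rw [show y + t + 1 - y = t + 1 by omega, ← e]; ring
  · simp only [mem_filter, mem_quads]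
    refine ⟨⟨hy, by omega, by omega, ha, ?_⟩, by omega⟩
    rw [show y + t + 1 - y = t + 1 by omega, ← e]; ring
  · simp only [Prod.mk.injEq]; refine ⟨?_, ?_, ?_, ?_⟩ <;> first | trivial | omega
  · simp only [Prod.mk.injEq]; refine ⟨?_, ?_, ?_, ?_⟩ <;> first | trivial | omega
  · simp only [Nat.cast_add, Nat.cast_one]
    rw [show y + t + 1 - y = t + 1 by omega]
    push_cast
    congr 1 <;> ring

lemma quadSum_split (M : ℕ) (h : ℤ → ℤ → ℤ → ℤ → ℤ) :
    quadSum M h = upperSum M h + upperSum M (fun a x b y => h b y a x) + diagSum M h := by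
  have h1 : upperSum M (fun a x b y => h b y a x) =
      ∑ v ∈ (quads M).filter (fun v => v.2.1 < v.2.2.2), h v.1 v.2.1 v.2.2.1 v.2.2.2 := by
    refine sum_nbij' (fun v => (v.2.2.1, v.2.2.2, v.1, v.2.1))
      (fun v => (v.2.2.1, v.2.2.2, v.1, v.2.1)) ?_ ?_ ?_ ?_ ?_
    all_goals rintro ⟨a, x, b, y⟩ hv
    all_goals first | rfl | skip
    all_goals
      simp only [mem_filter, mem_quads] at hv ⊢
      obtain ⟨⟨ha, hx, hb, hy, e⟩, hxy⟩ := hv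
      exact ⟨⟨hb, hy, ha, hx, by rw [← e]; ring⟩, hxy⟩
  rw [h1, upperSum, diagSum, quadSum, sum_filter, sum_filter, sum_filter, ← sum_add_distrib,
    ← sum_add_distrib]
  refine sum_congr rfl fun v _ => ?_
  rcases lt_trichotomy v.2.1 v.2.2.2 with hh | hh | hh
  · simp [hh, hh.ne, hh.le]
  · simp [hh]
  · simp [hh, hh.ne', hh.le]

/-- A Liouville-type identity. For a kernel `r` which is odd, antisymmetric under the exchange of
`(a, x)` and `(b, y)`, and invariant under `(a, x, b, y) ↦ (a + b, x, -b, x - y)`, and for an odd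
`χ` of period 3, a sum over all solutions of `a x + b y = M` equals a sum over the
solutions with `x = y`, that is, over factorisations of `M`. The sums of `χ (a - b) r (a, x, b, y)`
and of `χ (x + y) r (y, a + b, x - y, a)` are each computed in two ways, by cutting at `x = y`
before or after the exchanges `a ↔ x` and `b ↔ y`. -/
theorem liouville (M : ℕ) (χ : ℤ → ℤ) (hχ : ∀ a, χ (-a) = -χ a) (hχ3 : ∀ a k, χ (a + 3 * k) = χ a)
    (r : ℤ → ℤ → ℤ → ℤ → ℤ) (hneg : ∀ a x b y, r (-a) (-x) (-b) (-y) = -r a x b y)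
    (hσ : ∀ a x b y, r b y a x = -r a x b y)
    (hT : ∀ a x b y, r (a + b) x (-b) (x - y) = r a x b y) :
    2 * quadSum M (fun a x b y => χ a * (r (a + b) x b (y - x) - r y (x + b) (y - a) (-x))) =
      diagSum M (fun a x b y => χ (a - b) * r a x b y + χ (x + y) * r y (a + b) (x - y) a
        - χ (a + b) * r b (x + y) (a - b) x - 2 * (χ x * r y (a + b) (y - x) (-a))
        + 2 * (χ a * r (a + b) x b (y - x))) := by
  have hχ0 : χ 0 = 0 := by have := hχ 0; simp at this; omega
  -- With `S₁` the sum on the left of `e1` and `S₂` that of `e3`, the steps `e1`, `e2`, `e3` give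
  -- `S₁ + S₂` as a diagonal sum, while `e4`, `e5` express `S₁` and `S₂`, up to a diagonal sum, by the
  -- sums over `y < x` that occur in `e7` and `e6`.
  have e1 : quadSum M (fun a x b y => χ (a - b) * r a x b y) =
      2 * upperSum M (fun a x b y => χ (a - b) * r a x b y)
        + diagSum M (fun a x b y => χ (a - b) * r a x b y) := by
    rw [quadSum_split, two_mul]
    congr 2
    refine congrArg (upperSum M) ?_
    funext a x b y
    rw [← neg_sub, hχ, hσ]; ring
  have e2 : upperSum M (fun a x b y => χ (a - b) * r a x b y) =
      - upperSum M (fun a x b y => χ (x + y) * r y (a + b) (x - y) a) := by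
    rw [upperSum_tau, upperSum, upperSum, ← sum_neg_distrib]
    refine sum_congr rfl fun v _ => ?_
    -- The period 3 of `χ` identifies `χ (2 y - x)` with `χ (-(x + y))`.
    rw [← neg_mul, ← hχ, ← hχ3 (-_) (v.2.2.2 : ℤ)]
    congr 2; ring
  have e3 : quadSum M (fun a x b y => χ (x + y) * r y (a + b) (x - y) a) =
      2 * upperSum M (fun a x b y => χ (x + y) * r y (a + b) (x - y) a)
        + diagSum M (fun a x b y => χ (x + y) * r y (a + b) (x - y) a) := by
    rw [quadSum_split, two_mul]
    congr 2
    refine congrArg (upperSum M) ?_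
    funext a x b y
    rw [← hT y]
    congr 2 <;> ring
  have e4 : quadSum M (fun a x b y => χ (a - b) * r a x b y) =
      2 * upperSum M (fun a x b y => χ b * r (a + b) y a (x - y)) := by
    rw [quadSum_alpha, quadSum_beta, quadSum_split, two_mul]
    have : diagSum M (fun a x b y => χ (x - y) * r x a y b) = 0 := by
      refine sum_eq_zero fun v hv => ?_
      rw [(mem_filter.1 hv).2]; simp [hχ0]
    rw [this, add_zero]
    have h2 : upperSum M (fun a x b y => χ (y - x) * r y b x a) =
        upperSum M (fun a x b y => χ (x - y) * r x a y b) := by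
      refine congrArg (upperSum M) ?_
      funext a x b y
      rw [← neg_sub, hχ, hσ]; ring
    rw [h2, upperSum_tau]
    simp only [add_sub_cancel_left]
  have e5 : quadSum M (fun a x b y => χ (x + y) * r y (a + b) (x - y) a) =
      - 2 * upperSum M (fun a x b y => χ x * r y (a + b) (y - x) (-a))
        + diagSum M (fun a x b y => χ (a + b) * r b (x + y) (a - b) x) := by
    rw [quadSum_alpha, quadSum_beta, quadSum_split]
    congr 1
    have h2 : upperSum M (fun a x b y => χ (b + a) * r a (y + x) (b - a) y) =
        upperSum M (fun a x b y => χ (a + b) * r b (x + y) (a - b) x) := by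
      refine congrArg (upperSum M) ?_
      funext a x b y
      rw [← hT a]
      congr 2 <;> ring
    rw [h2, upperSum_tau, ← two_mul, neg_mul, ← mul_neg]
    congr 1
    unfold upperSum
    rw [← sum_neg_distrib]
    refine sum_congr rfl fun v _ => ?_
    generalize (v.1 : ℤ) = a, (v.2.1 : ℤ) = x, (v.2.2.1 : ℤ) = b, (v.2.2.2 : ℤ) = y
    have c1 := hT (x - y) (a + b + a) (y - (x - y)) (a + b)
    have c2 := hσ y (a + b + a) (x - 2 * y) a
    have c3 := hT (x - 2 * y) a y (a + b + a)
    have c4 := hσ (x - y) a (-y) (-(a + b))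
    have c5 := hneg y (a + b) (y - x) (-a)
    ring_nf at c1 c2 c3 c4 c5 ⊢
    rw [← c1]
    linear_combination (χ x) * (c2 + c3 - c4 + c5)
  have e6 : quadSum M (fun a x b y => χ a * r y (x + b) (y - a) (-x)) =
      upperSum M (fun a x b y => χ x * r y (a + b) (y - x) (-a))
       + upperSum M (fun a x b y => χ a * r (a + b) x b (y - x))
       + diagSum M (fun a x b y => χ x * r y (a + b) (y - x) (-a)) := by
    rw [quadSum_alpha, quadSum_split]
    congr 2
    rw [upperSum_tau]
    refine congrArg (upperSum M) ?_
    funext a x b y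
    congr 2 <;> ring
  have e7 : quadSum M (fun a x b y => χ a * r (a + b) x b (y - x)) =
      upperSum M (fun a x b y => χ a * r (a + b) x b (y - x))
       + upperSum M (fun a x b y => χ b * r (a + b) y a (x - y))
       + diagSum M (fun a x b y => χ a * r (a + b) x b (y - x)) := by
    rw [quadSum_split]
    congr 2
    refine congrArg (upperSum M) ?_
    funext a x b y
    congr 2; ring
  have e8 : quadSum M (fun a x b y => χ a * (r (a + b) x b (y - x) - r y (x + b) (y - a) (-x))) =
      quadSum M (fun a x b y => χ a * r (a + b) x b (y - x)) -
      quadSum M (fun a x b y => χ a * r y (x + b) (y - a) (-x)) := by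
    unfold quadSum; rw [← sum_sub_distrib]; simp only [mul_sub]
  have e9 : diagSum M (fun a x b y => χ (a - b) * r a x b y + χ (x + y) * r y (a + b) (x - y) a
        - χ (a + b) * r b (x + y) (a - b) x - 2 * (χ x * r y (a + b) (y - x) (-a))
        + 2 * (χ a * r (a + b) x b (y - x))) =
      diagSum M (fun a x b y => χ (a - b) * r a x b y)
      + diagSum M (fun a x b y => χ (x + y) * r y (a + b) (x - y) a)
      - diagSum M (fun a x b y => χ (a + b) * r b (x + y) (a - b) x)
      - 2 * diagSum M (fun a x b y => χ x * r y (a + b) (y - x) (-a))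
      + 2 * diagSum M (fun a x b y => χ a * r (a + b) x b (y - x)) := by
    unfold diagSum
    rw [mul_sum, mul_sum, ← sum_add_distrib, ← sum_sub_distrib, ← sum_sub_distrib,
      ← sum_add_distrib]
  rw [e8, e9]
  linarith

/-! ### The kernel modulo 8 -/

/-- The nontrivial Dirichlet character `χ₃` modulo 3. -/
def c3 (a : ℤ) : ℤ := if a % 3 = 1 then 1 else if a % 3 = 2 then -1 else 0
/-- The nontrivial Dirichlet character `χ₄` modulo 4. -/
def c4 (a : ℤ) : ℤ := if a % 4 = 1 then 1 else if a % 4 = 3 then -1 else 0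

/-- The values of `seed` up to the factor `χ₄ b`, in terms of `a b` and `x b` modulo 8. They solve
the linear system over the residues modulo 8 that expresses `point_res`. -/
def seedTable : ℤ → ℤ → ℤ
  | 0, 4 => 2
  | 2, 0 => -2
  | 2, 2 => 2
  | 2, 4 => -1
  | 2, 6 => 1
  | 4, 0 => 1
  | 4, 4 => 1
  | 6, 0 => -3
  | 6, 4 => -2
  | 6, 6 => 1
  | _, _ => 0

/-- The function from which the kernel `rr` is built by symmetrisation; it depends only on residues
modulo 8. -/
def seed (a x b y : ℤ) : ℤ :=
  if a % 2 = 0 ∧ x % 2 = 0 ∧ (a * x + b * y) % 8 = 1 then c4 b * seedTable (a * b % 8) (x * b % 8)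
  else 0

/-- The kernel to which `liouville` is applied: the symmetrisation of `seed` under the exchange
of `(a, x)` with `(b, y)` and under `(a, x, b, y) ↦ (a + b, x, -b, x - y)`. -/
def rr (a x b y : ℤ) : ℤ :=
  seed a x b y - seed b y a x + seed (a + b) x (-b) (x - y) - seed (a + b) y (-a) (y - x)
    + seed (-a) (y - x) (a + b) y - seed (-b) (x - y) (a + b) x

/-- The weight produced by `rr` in `liouville`. On `b` odd, `y ≡ 2 mod 4` it is `4 χ₄(b)`, the
weight that counts `tquad 1 1 3 4`; on `b ≡ 2 mod 4`, `4 ∣ y` it is `2 χ₄(b/2) (-1)^(y/4)`, the weight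
that appears in `thetaU_eq`. -/
def tgt (b y : ℤ) : ℤ :=
  if b % 2 = 1 ∧ y % 4 = 2 then 4 * c4 b
  else if b % 4 = 2 ∧ y % 4 = 0 then 2 * c4 (b / 2) * (if y % 8 = 0 then 1 else -1) else 0

/-- A correction weight in `point_res`. It enters as a difference that cancels when a factor 2 is
moved from `y` to `b`. -/
def dd (b y : ℤ) : ℤ :=
  if b % 2 = 0 then 2 * c4 y else if y % 2 = 0 then -2 * c4 b else if b * y % 4 = 3 then 4 * c4 b else 0

/-- A correction weight in `point_res`. It enters as a sum that cancels against `χ₃(a)` when a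
factor 2 is moved from `x` to `a`, because `χ₃(2) = -1`. -/
def cc (a x : ℤ) : ℤ :=
  if a * x % 4 ≠ 0 then 0 else if a % 2 = 1 ∨ x % 2 = 1 then -4
  else if a % 4 = 0 ∧ x % 4 = 0 then 6 else if a % 4 = 0 ∨ x % 4 = 0 then 2 else -2

/-- The left-hand weight of `liouville` for the kernel `rr`, without the factor `χ a`. -/
def QQ (a x b y : ℤ) : ℤ := rr (a + b) x b (y - x) - rr y (x + b) (y - a) (-x)

set_option maxRecDepth 100000 in
/-- After symmetrisation in `b ↔ y`, the weight `QQ` agrees with `tgt` up to corrections whose sums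
vanish. Everything depends only on residues modulo 8, so this is a finite check. -/
lemma point_res : ∀ a < 8, ∀ x < 8, ∀ b < 8, ∀ y < 8, (a * x + b * y) % 8 = 1 →
    QQ (a : ℕ) (x : ℕ) (b : ℕ) (y : ℕ) + QQ a x y b = tgt b y + tgt y b
      + ((if y % 2 = 0 then dd b ((y / 2 : ℕ) : ℤ) else 0) - (if b % 2 = 0 then dd ((b / 2 : ℕ) : ℤ) y else 0))
      + ((if x % 2 = 0 then cc a ((x / 2 : ℕ) : ℤ) else 0) + (if a % 2 = 0 then cc ((a / 2 : ℕ) : ℤ) x else 0)) * c4 b := by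
  decide +kernel

/-- Moving a factor 2 from `y` to `b` is a bijection from the solutions with `y` even to those
with `b` even. -/
lemma quadSum_half (M : ℕ) (F : ℤ → ℤ → ℤ → ℤ → ℤ) :
    quadSum M (fun a x b y => if y % 2 = 0 then F a x b (y / 2) else 0) =
      quadSum M (fun a x b y => if b % 2 = 0 then F a x (b / 2) y else 0) := by
  unfold quadSum
  rw [← sum_filter, ← sum_filter]
  refine sum_nbij' (fun v => (v.1, v.2.1, 2 * v.2.2.1, v.2.2.2 / 2))
    (fun v => (v.1, v.2.1, v.2.2.1 / 2, 2 * v.2.2.2)) ?_ ?_ ?_ ?_ ?_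
  all_goals rintro ⟨a, x, b, y⟩ hv
  all_goals
    simp only [mem_filter, mem_quads] at hv ⊢
    obtain ⟨⟨ha, hx, hb, hy, e⟩, h2⟩ := hv
  · obtain ⟨k, rfl⟩ : ∃ k, y = 2 * k := ⟨y / 2, by omega⟩
    refine ⟨⟨ha, hx, by omega, by omega, ?_⟩, by omega⟩
    rw [← e, Nat.mul_div_cancel_left _ two_pos]; ring
  · obtain ⟨k, rfl⟩ : ∃ k, b = 2 * k := ⟨b / 2, by omega⟩
    refine ⟨⟨ha, hx, by omega, by omega, ?_⟩, by omega⟩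
    rw [← e, Nat.mul_div_cancel_left _ two_pos]; ring
  · simp only [Prod.mk.injEq, true_and]; omega
  · simp only [Prod.mk.injEq, true_and]; omega
  · congr 1 <;> omega

/-- The analogue of `quadSum_half` for the pair `(a, x)`. -/
lemma quadSum_half' (M : ℕ) (F : ℤ → ℤ → ℤ → ℤ → ℤ) :
    quadSum M (fun a x b y => if x % 2 = 0 then F a (x / 2) b y else 0) =
      quadSum M (fun a x b y => if a % 2 = 0 then F (a / 2) x b y else 0) := by
  rw [quadSum_sigma, quadSum_half M (fun a x b y => F b y a x), quadSum_sigma]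

lemma quadSum_add (M : ℕ) (f g : ℤ → ℤ → ℤ → ℤ → ℤ) :
    quadSum M (fun a x b y => f a x b y + g a x b y) = quadSum M f + quadSum M g :=
  sum_add_distrib

lemma quadSum_sub (M : ℕ) (f g : ℤ → ℤ → ℤ → ℤ → ℤ) :
    quadSum M (fun a x b y => f a x b y - g a x b y) = quadSum M f - quadSum M g :=
  sum_sub_distrib _ _

lemma quadSum_congr {M : ℕ} {f g : ℤ → ℤ → ℤ → ℤ → ℤ}
    (h : ∀ a x b y : ℕ, 0 < a → 0 < x → 0 < b → 0 < y → a * x + b * y = M →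
      f a x b y = g a x b y) : quadSum M f = quadSum M g := by
  refine sum_congr rfl ?_
  rintro ⟨a, x, b, y⟩ hv
  obtain ⟨ha, hx, hb, hy, e⟩ := mem_quads.1 hv
  exact h a x b y ha hx hb hy e

lemma c3_neg (a : ℤ) : c3 (-a) = -c3 a := by unfold c3; split_ifs <;> omega
lemma c3_add (a k : ℤ) : c3 (a + 3 * k) = c3 a := by unfold c3; split_ifs <;> omega
lemma c4_neg (a : ℤ) : c4 (-a) = -c4 a := by unfold c4; split_ifs <;> omega
lemma c4_congr {a b : ℤ} (h : a % 4 = b % 4) : c4 a = c4 b := by unfold c4; rw [h]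
lemma c3_congr {a b : ℤ} (h : a % 3 = b % 3) : c3 a = c3 b := by unfold c3; rw [h]

lemma seed_congr {a x b y a' x' b' y' : ℤ} (ha : a ≡ a' [ZMOD 8]) (hx : x ≡ x' [ZMOD 8])
    (hb : b ≡ b' [ZMOD 8]) (hy : y ≡ y' [ZMOD 8]) : seed a x b y = seed a' x' b' y' := by
  have h1 : a % 2 = a' % 2 := by unfold Int.ModEq at ha; omega
  have h2 : x % 2 = x' % 2 := by unfold Int.ModEq at hx; omega
  have h3 : (a * x + b * y) % 8 = (a' * x' + b' * y') % 8 := (ha.mul hx).add (hb.mul hy)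
  have h4 : c4 b = c4 b' := c4_congr (by unfold Int.ModEq at hb; omega)
  have h5 : a * b % 8 = a' * b' % 8 := ha.mul hb
  have h6 : x * b % 8 = x' * b' % 8 := hx.mul hb
  unfold seed
  rw [h1, h2, h3, h4, h5, h6]

lemma rr_congr {a x b y a' x' b' y' : ℤ} (ha : a ≡ a' [ZMOD 8]) (hx : x ≡ x' [ZMOD 8])
    (hb : b ≡ b' [ZMOD 8]) (hy : y ≡ y' [ZMOD 8]) : rr a x b y = rr a' x' b' y' := by
  unfold rr
  rw [seed_congr ha hx hb hy, seed_congr hb hy ha hx,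
    seed_congr (ha.add hb) hx hb.neg (hx.sub hy), seed_congr (ha.add hb) hy ha.neg (hy.sub hx),
    seed_congr ha.neg (hy.sub hx) (ha.add hb) hy, seed_congr hb.neg (hx.sub hy) (ha.add hb) hx]

lemma QQ_congr {a x b y a' x' b' y' : ℤ} (ha : a ≡ a' [ZMOD 8]) (hx : x ≡ x' [ZMOD 8])
    (hb : b ≡ b' [ZMOD 8]) (hy : y ≡ y' [ZMOD 8]) : QQ a x b y = QQ a' x' b' y' := by
  unfold QQ
  rw [rr_congr (ha.add hb) hx hb (hy.sub hx), rr_congr hy (hx.add hb) (hy.sub ha) hx.neg]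

lemma tgt_congr {b y b' y' : ℤ} (hb : b ≡ b' [ZMOD 8]) (hy : y ≡ y' [ZMOD 8]) :
    tgt b y = tgt b' y' := by
  unfold Int.ModEq at hb hy
  unfold tgt
  rw [show b % 2 = b' % 2 by omega, show b % 4 = b' % 4 by omega, show y % 4 = y' % 4 by omega,
    hy, c4_congr (show b % 4 = b' % 4 by omega), c4_congr (show b / 2 % 4 = b' / 2 % 4 by omega)]

lemma dd_congr {b y b' y' : ℤ} (hb : b ≡ b' [ZMOD 4]) (hy : y ≡ y' [ZMOD 4]) :
    dd b y = dd b' y' := by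
  have h : b * y % 4 = b' * y' % 4 := hb.mul hy
  unfold Int.ModEq at hb hy
  unfold dd
  rw [show b % 2 = b' % 2 by omega, show y % 2 = y' % 2 by omega, h, c4_congr hb, c4_congr hy]

lemma cc_congr {b y b' y' : ℤ} (hb : b ≡ b' [ZMOD 4]) (hy : y ≡ y' [ZMOD 4]) :
    cc b y = cc b' y' := by
  have h : b * y % 4 = b' * y' % 4 := hb.mul hy
  unfold Int.ModEq at hb hy
  unfold cc
  rw [show b % 2 = b' % 2 by omega, show y % 2 = y' % 2 by omega, h, hb, hy]

/-- The identity of `point_res` for arbitrary natural numbers. -/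
lemma point_id (a x b y : ℕ) (h : (a * x + b * y) % 8 = 1) :
    QQ a x b y + QQ a x y b = tgt b y + tgt y b
      + ((if (y : ℤ) % 2 = 0 then dd b (y / 2) else 0)
        - (if (b : ℤ) % 2 = 0 then dd (b / 2) y else 0))
      + ((if (x : ℤ) % 2 = 0 then cc a (x / 2) else 0)
        + (if (a : ℤ) % 2 = 0 then cc (a / 2) x else 0)) * c4 b := by
  have H := point_res (a % 8) (by omega) (x % 8) (by omega) (b % 8) (by omega) (y % 8) (by omega)
    (by rw [← h]; simp [Nat.add_mod, Nat.mul_mod])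
  have e (u : ℕ) : ((u % 8 : ℕ) : ℤ) ≡ u [ZMOD 8] := by unfold Int.ModEq; omega
  have e4 (u : ℕ) : ((u % 8 : ℕ) : ℤ) ≡ u [ZMOD 4] := by unfold Int.ModEq; omega
  have e2 (u : ℕ) : ((u % 8 / 2 : ℕ) : ℤ) ≡ u / 2 [ZMOD 4] := by unfold Int.ModEq; omega
  have p (u : ℕ) : (u % 8 % 2 = 0) = ((u : ℤ) % 2 = 0) := propext (by omega)
  rw [QQ_congr (e a) (e x) (e b) (e y), QQ_congr (e a) (e x) (e y) (e b), tgt_congr (e b) (e y),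
    tgt_congr (e y) (e b), dd_congr (e4 b) (e2 y), dd_congr (e2 b) (e4 y), cc_congr (e4 a) (e2 x),
    cc_congr (e2 a) (e4 x), c4_congr (e4 b)] at H
  simpa only [p] using H

lemma seed_neg (a x b y : ℤ) : seed (-a) (-x) (-b) (-y) = -seed a x b y := by
  have h1 : -a % 2 = a % 2 := by omega
  have h2 : -x % 2 = x % 2 := by omega
  unfold seed
  rw [h1, h2, neg_mul_neg, neg_mul_neg, neg_mul_neg, neg_mul_neg, c4_neg]
  split_ifs <;> ring

lemma rr_neg (a x b y : ℤ) : rr (-a) (-x) (-b) (-y) = -rr a x b y := by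
  have h1 := seed_neg a x b y
  have h2 := seed_neg b y a x
  have h3 := seed_neg (a + b) x (-b) (x - y)
  have h4 := seed_neg (a + b) y (-a) (y - x)
  have h5 := seed_neg (-a) (y - x) (a + b) y
  have h6 := seed_neg (-b) (x - y) (a + b) x
  unfold rr
  rw [h1, h2, show -a + -b = -(a + b) by ring, show -x - -y = -(x - y) by ring,
    show -y - -x = -(y - x) by ring, h3, h4, h5, h6]
  ring

lemma rr_sigma (a x b y : ℤ) : rr b y a x = -rr a x b y := by
  unfold rr
  rw [add_comm b a]
  ring

lemma rr_tau (a x b y : ℤ) : rr (a + b) x (-b) (x - y) = rr a x b y := by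
  unfold rr
  rw [show a + b + -b = a by ring, show x - (x - y) = y by ring, show x - y - x = -y by ring,
    show - -b = b by ring]
  have h := seed_neg (-a) (y - x) (a + b) y
  have h2 := seed_neg (a + b) y (-a) (y - x)
  rw [show -(-a) = a by ring, show -(y - x) = x - y by ring] at h h2
  rw [h2, h]
  ring

/-- The sum of `χ₃(a) tgt(b, y)` over `a x + b y = M` reduces to solutions with `x = y`: the
identity `liouville` for `rr`, in which the weight `QQ` is replaced by `tgt` by means of `point_id`. -/
lemma main_diag (M : ℕ) (hM : M % 8 = 1) :
    2 * quadSum M (fun a _ b y => c3 a * tgt b y) =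
      diagSum M (fun a x b y => c3 (a - b) * rr a x b y + c3 (x + y) * rr y (a + b) (x - y) a
        - c3 (a + b) * rr b (x + y) (a - b) x - 2 * (c3 x * rr y (a + b) (y - x) (-a))
        + 2 * (c3 a * rr (a + b) x b (y - x))) := by
  rw [← liouville M c3 c3_neg c3_add rr rr_neg (fun a x b y => rr_sigma a x b y) rr_tau]
  have h2 (f : ℤ → ℤ → ℤ → ℤ → ℤ) : 2 * quadSum M f =
      quadSum M (fun a x b y => f a x b y + f a x y b) := by
    rw [quadSum_add, ← quadSum_beta M f]; ring
  rw [h2, h2]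
  have hd := quadSum_half M (fun a _ b y => c3 a * dd b y)
  have hc := quadSum_half' M (fun a x b _ => c3 a * cc a x * c4 b)
  have key : quadSum M (fun a x b y => c3 a * QQ a x b y + c3 a * QQ a x y b) =
      quadSum M (fun a x b y => ((c3 a * tgt b y + c3 a * tgt y b)
        + ((if y % 2 = 0 then c3 a * dd b (y / 2) else 0)
          - (if b % 2 = 0 then c3 a * dd (b / 2) y else 0)))
        + ((if x % 2 = 0 then c3 a * cc a (x / 2) * c4 b else 0)
          - (if a % 2 = 0 then c3 (a / 2) * cc (a / 2) x * c4 b else 0))) := by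
    refine quadSum_congr fun a x b y _ _ _ _ e => ?_
    rw [← mul_add, point_id a x b y (by rw [e]; exact hM)]
    -- The sign `χ₃(2) = -1` turns the sum of the two `cc` terms into a difference.
    have h3 : (a : ℤ) % 2 = 0 → c3 a = -c3 ((a : ℤ) / 2) := by
      intro h; unfold c3; split_ifs <;> omega
    by_cases ha : (a : ℤ) % 2 = 0
    · rw [if_pos ha, if_pos ha, h3 ha]
      split_ifs <;> ring
    · rw [if_neg ha, if_neg ha]
      split_ifs <;> ring
  rw [quadSum_add, quadSum_add, quadSum_add, quadSum_add, quadSum_sub, quadSum_sub, hd, hc,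
    sub_self, sub_self, add_zero, add_zero] at key
  rw [quadSum_add, quadSum_add]
  exact key.symm

/-! ### Evaluation of the diagonal -/

/-- The summand on the right of `main_diag` at the solution `(a, x, e - a, x)` attached to the
factorisation `M = e x` and to `0 < a < e`. -/
def KK (e x a : ℤ) : ℤ :=
  c3 (2 * a - e) * rr a x (e - a) x + c3 (2 * x) * rr x e 0 a - c3 e * rr (e - a) (2 * x) (2 * a - e) x
    - 2 * (c3 x * rr x e 0 (-a)) + 2 * (c3 a * rr e x (e - a) 0)

/-- The character `χ₁₂ = χ₃ χ₄` modulo 12, the quadratic character of `ℚ(√3)`. -/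
def c12 (a : ℤ) : ℤ := c3 a * c4 a

lemma KK_congr {e x a e' x' a' : ℤ} (he : e ≡ e' [ZMOD 24]) (hx : x ≡ x' [ZMOD 24])
    (ha : a ≡ a' [ZMOD 24]) : KK e x a = KK e' x' a' := by
  have he8 : e ≡ e' [ZMOD 8] := he.of_dvd (by norm_num)
  have hx8 : x ≡ x' [ZMOD 8] := hx.of_dvd (by norm_num)
  have ha8 : a ≡ a' [ZMOD 8] := ha.of_dvd (by norm_num)
  have he3 : e ≡ e' [ZMOD 3] := he.of_dvd (by norm_num)
  have hx3 : x ≡ x' [ZMOD 3] := hx.of_dvd (by norm_num)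
  have ha3 : a ≡ a' [ZMOD 3] := ha.of_dvd (by norm_num)
  unfold KK
  rw [c3_congr ((ha3.mul_left 2).sub he3), c3_congr (hx3.mul_left 2), c3_congr he3, c3_congr hx3,
    c3_congr ha3, rr_congr ha8 hx8 (he8.sub ha8) hx8, rr_congr hx8 he8 (Int.ModEq.refl 0) ha8,
    rr_congr (he8.sub ha8) (hx8.mul_left 2) ((ha8.mul_left 2).sub he8) hx8,
    rr_congr hx8 he8 (Int.ModEq.refl 0) ha8.neg, rr_congr he8 hx8 (he8.sub ha8) (Int.ModEq.refl 0)]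

lemma sum_range_periodic (f : ℕ → ℤ) (hf : ∀ a, f (a + 24) = f a) (q r : ℕ) :
    ∑ a ∈ range (24 * q + r), f a = q * ∑ a ∈ range 24, f a + ∑ a ∈ range r, f a := by
  induction q with
  | zero => simp
  | succ q ih =>
    rw [show 24 * (q + 1) + r = 24 + (24 * q + r) by ring, sum_range_add]
    have : ∀ a ∈ range (24 * q + r), f (24 + a) = f a := fun a _ => by rw [add_comm, hf]
    rw [sum_congr rfl this, ih]; push_cast; ring

/-- The sum of `KK e x a` over `0 < a < e`. The sum over `range e` minus the term `a = 0` is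
better suited to periodicity arguments. -/
def LL (e x : ℕ) : ℤ := ∑ a ∈ range e, KK e x a - KK e x 0

/-- The sum of `KK e x a` over a full period in `a`. -/
def TT (e x : ℕ) : ℤ := ∑ a ∈ range 24, KK e x a

set_option maxRecDepth 100000 in
lemma TT_res : ∀ e < 24, ∀ x < 24, (e * x) % 8 = 1 →
    TT e x = 12 * (3 * c12 (x : ℕ) - c12 (e : ℕ)) := by
  decide +kernel

set_option maxRecDepth 100000 in
/-- The evaluation of `LL` on residues. Only the symmetrisation in `e ↔ x` has a closed form,
and only that is needed, since `LL` is summed over all factorisations of `M`. -/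
lemma LL_res : ∀ e < 24, ∀ x < 24, (e * x) % 8 = 1 →
    2 * (LL e x + LL x e) = e * (3 * c12 (x : ℕ) - c12 (e : ℕ)) + x * (3 * c12 e - c12 x)
      - 2 * (c3 e + c3 x) := by
  decide +kernel

lemma LL_eq (e x : ℕ) : LL e x = (e / 24 : ℕ) * TT (e % 24) (x % 24) + LL (e % 24) (x % 24) := by
  have hm (u : ℕ) : (u : ℤ) ≡ ((u % 24 : ℕ) : ℤ) [ZMOD 24] := by unfold Int.ModEq; omega
  have hp : ∀ a : ℕ, KK e x ((a + 24 : ℕ) : ℤ) = KK e x a := fun a =>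
    KK_congr (Int.ModEq.refl _) (Int.ModEq.refl _) (by unfold Int.ModEq; omega)
  have hk : ∀ a : ℤ, KK e x a = KK (e % 24 : ℕ) (x % 24 : ℕ) a := fun a =>
    KK_congr (hm e) (hm x) (Int.ModEq.refl _)
  unfold LL TT
  conv_lhs => rw [← Nat.div_add_mod e 24]
  rw [sum_range_periodic _ (by rw [Nat.div_add_mod e 24]; exact hp), Nat.div_add_mod e 24]
  simp only [hk]
  ring

lemma c12_mod (u : ℕ) : c12 (u % 24 : ℕ) = c12 u := by
  unfold c12
  rw [c3_congr (b := u) (by omega), c4_congr (b := u) (by omega)]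

/-- `LL_res` for all `e, x`: as `KK` has period 24 in each variable, `LL` is a periodic function
plus `e / 24` times `TT`, which `TT_res` evaluates. -/
lemma LL_symm (e x : ℕ) (h : e * x % 8 = 1) :
    2 * (LL e x + LL x e) = e * (3 * c12 x - c12 e) + x * (3 * c12 e - c12 x)
      - 2 * (c3 e + c3 x) := by
  have h' : (e % 24) * (x % 24) % 8 = 1 := by
    rw [Nat.mul_mod, Nat.mod_mod_of_dvd _ (by norm_num), Nat.mod_mod_of_dvd _ (by norm_num),
      ← Nat.mul_mod, h]
  have h'' : (x % 24) * (e % 24) % 8 = 1 := by rw [mul_comm, h']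
  have he := Nat.mod_lt e (show 24 > 0 by norm_num)
  have hx := Nat.mod_lt x (show 24 > 0 by norm_num)
  have H := LL_res _ he _ hx h'
  rw [LL_eq e x, LL_eq x e, TT_res _ he _ hx h', TT_res _ hx _ he h'']
  simp only [c12_mod] at H ⊢
  rw [c3_congr (a := (e % 24 : ℕ)) (b := e) (by omega),
    c3_congr (a := (x % 24 : ℕ)) (b := x) (by omega)] at H
  have e1 : (e : ℤ) = 24 * (e / 24 : ℕ) + (e % 24 : ℕ) := by omega
  have e2 : (x : ℤ) = 24 * (x / 24 : ℕ) + (x % 24 : ℕ) := by omega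
  generalize LL (e % 24) (x % 24) = A at *
  generalize LL (x % 24) (e % 24) = B at *
  generalize c12 (e : ℤ) = C at *
  generalize c12 (x : ℤ) = D at *
  linear_combination H - (3 * D - C) * e1 - (3 * C - D) * e2

/-- A solution of `a x + b x = M` is a factorisation `M = e x` together with `0 < a < e`. -/
lemma diag_eq (M : ℕ) (hM : 0 < M) (h : ℤ → ℤ → ℤ → ℤ → ℤ) :
    diagSum M h = ∑ p ∈ M.divisorsAntidiagonal, ∑ a ∈ Ico 1 p.1, h a p.2 (p.1 - a) p.2 := by
  unfold diagSum
  rw [sum_sigma']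
  refine sum_bij' (fun v _ => ⟨(v.1 + v.2.2.1, v.2.1), v.1⟩)
    (fun s _ => (s.2, s.1.2, s.1.1 - s.2, s.1.2)) ?_ ?_ ?_ ?_ ?_
  · rintro ⟨a, x, b, y⟩ hv
    simp only [mem_filter, mem_quads] at hv
    obtain ⟨⟨ha, hx, hb, hy, e⟩, rfl⟩ := hv
    simp only [mem_sigma, Nat.mem_divisorsAntidiagonal, mem_Ico]
    exact ⟨⟨by rw [← e]; ring, hM.ne'⟩, ha, by omega⟩
  · rintro ⟨⟨e, x⟩, a⟩ hs
    simp only [mem_sigma, Nat.mem_divisorsAntidiagonal, mem_Ico] at hs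
    obtain ⟨⟨he, h0⟩, ha, hb⟩ := hs
    simp only [mem_filter, mem_quads, and_true]
    refine ⟨ha, ?_, by omega, ?_, ?_⟩
    · rcases Nat.eq_zero_or_pos x with rfl | h
      · omega
      · exact h
    · rcases Nat.eq_zero_or_pos x with rfl | h
      · omega
      · exact h
    · rw [← add_mul, ← he]; congr 1; omega
  · rintro ⟨a, x, b, y⟩ hv
    simp only [mem_filter, mem_quads] at hv
    obtain ⟨⟨ha, hx, hb, hy, e⟩, rfl⟩ := hv
    simp
  · rintro ⟨⟨e, x⟩, a⟩ hs
    simp only [mem_sigma, mem_Ico] at hs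
    obtain ⟨_, ha, hb⟩ := hs
    have : a + (e - a) = e := by omega
    simp [this]
  · rintro ⟨a, x, b, y⟩ hv
    simp only [mem_filter, mem_quads] at hv
    obtain ⟨⟨ha, hx, hb, hy, e⟩, rfl⟩ := hv
    simp

/-- The sum of `χ₃(a) tgt(b, y)` over the solutions of `a x + b y = M` as a divisor sum, for
`M ≡ 1 mod 8`. -/
theorem main_identity (M : ℕ) (hM : M % 8 = 1) :
    4 * quadSum M (fun a _ b y => c3 a * tgt b y) =
      ∑ p ∈ M.divisorsAntidiagonal, (p.1 : ℤ) * (3 * c12 p.2 - c12 p.1)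
        - 2 * ∑ d ∈ M.divisors, c3 d := by
  have h1 : 2 * quadSum M (fun a _ b y => c3 a * tgt b y) =
      ∑ p ∈ M.divisorsAntidiagonal, LL p.1 p.2 := by
    rw [main_diag M hM, diag_eq M (by omega)]
    refine sum_congr rfl fun p hp => ?_
    have hp1 : 0 < p.1 := by
      rcases Nat.eq_zero_or_pos p.1 with h | h
      · simp [Nat.mem_divisorsAntidiagonal, h] at hp; omega
      · exact h
    unfold LL
    rw [range_eq_Ico, sum_eq_sum_Ico_succ_bot hp1, zero_add, Nat.cast_zero, add_sub_cancel_left]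
    refine sum_congr rfl fun a _ => ?_
    unfold KK
    rw [show (a : ℤ) - (p.1 - a) = 2 * a - p.1 by ring, show (p.2 : ℤ) + p.2 = 2 * p.2 by ring,
      show (a : ℤ) + (p.1 - a) = p.1 by ring, sub_self]
  have hsw (f : ℕ → ℕ → ℤ) : ∑ p ∈ M.divisorsAntidiagonal, f p.1 p.2 =
      ∑ p ∈ M.divisorsAntidiagonal, f p.2 p.1 :=
    sum_nbij' Prod.swap Prod.swap (fun p hp => Nat.swap_mem_divisorsAntidiagonal.2 hp)
      (fun p hp => Nat.swap_mem_divisorsAntidiagonal.2 hp) (fun _ _ => rfl) (fun _ _ => rfl)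
      (fun _ _ => rfl)
  have h2 := hsw LL
  have h3 : ∑ p ∈ M.divisorsAntidiagonal, c3 p.1 = ∑ d ∈ M.divisors, c3 d :=
    Nat.sum_divisorsAntidiagonal (fun a _ => c3 a)
  have h4 := hsw (fun a _ => c3 a)
  have h5 := hsw (fun a b => (a : ℤ) * (3 * c12 b - c12 a))
  have h6 : ∑ p ∈ M.divisorsAntidiagonal, 2 * (LL p.1 p.2 + LL p.2 p.1) =
      ∑ p ∈ M.divisorsAntidiagonal, ((p.1 : ℤ) * (3 * c12 p.2 - c12 p.1)
        + p.2 * (3 * c12 p.1 - c12 p.2) - 2 * (c3 p.1 + c3 p.2)) := by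
    refine sum_congr rfl fun p hp => LL_symm _ _ ?_
    rw [(Nat.mem_divisorsAntidiagonal.1 hp).1, hM]
  rw [sum_sub_distrib, sum_add_distrib, ← mul_sum, ← mul_sum, sum_add_distrib, sum_add_distrib,
    ← h2, ← h5, ← h4, h3] at h6
  linarith

/-! ### An Uspensky-type identity over `x² + 4 A C = m` -/

/-- The triples `(x, A, C)` with `A, C > 0` and `x² + 4 A C = m`. The box in the definition
contains all of them. -/
noncomputable def Om (m : ℤ) : Finset (ℤ × ℤ × ℤ) :=
  (Icc (-m) m ×ˢ Icc 1 m ×ˢ Icc 1 m).filter fun v => v.1 ^ 2 + 4 * v.2.1 * v.2.2 = m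

lemma mem_Om {m x A C : ℤ} : (x, A, C) ∈ Om m ↔ 0 < A ∧ 0 < C ∧ x ^ 2 + 4 * A * C = m := by
  simp only [Om, mem_filter, mem_product, mem_Icc]
  constructor
  · rintro ⟨⟨_, h1, h2⟩, h3⟩
    exact ⟨by omega, by omega, h3⟩
  · rintro ⟨h1, h2, h3⟩
    have : 0 < A * C := mul_pos h1 h2
    refine ⟨⟨⟨?_, ?_⟩, ⟨by omega, ?_⟩, by omega, ?_⟩, h3⟩ <;> nlinarith

/-- The integers `u` with `u² = m`: two, one or none of them. -/
noncomputable def sqs (m : ℤ) : Finset ℤ := (Icc (-m) m).filter fun u => u ^ 2 = m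

lemma mem_sqs {m u : ℤ} : u ∈ sqs m ↔ u ^ 2 = m := by
  simp only [sqs, mem_filter, mem_Icc, and_iff_right_iff_imp]
  rintro rfl
  constructor <;> nlinarith [sq_nonneg (u + 1), sq_nonneg (u - 1), sq_nonneg u, Int.le_self_sq u, Int.le_self_sq (-u)]

/-- The values of `hseed` up to the factor `χ₄ x`, in terms of `x A` and `x C` modulo 8. They solve
the linear system expressing `hh_res` and `hh_diag_res`. -/
def hTable : ℤ → ℤ → ℤ
  | 2, 2 => 1
  | 6, 6 => -1
  | 0, 2 => -1
  | 0, 6 => -1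
  | 2, 0 => 1
  | 6, 0 => 1
  | _, _ => 0

/-- The function modulo 8 from which `hh` is built by antisymmetrisation. -/
def hseed (x A C : ℤ) : ℤ :=
  if x % 2 = 1 ∧ A % 2 = 0 ∧ C % 2 = 0 then c4 x * hTable (x * A % 8) (x * C % 8) else 0

/-- The combination of `hseed` that changes sign under the two involutions
`(x, A, C) ↦ (2 C - x, A + x - C, C)` and `(x, A, C) ↦ (-x - 2 A, A, C - A - x)`, when
`x² + 4 A C ≡ 1 mod 8`. -/
def hh (x A C : ℤ) : ℤ :=
  hseed x A C - hseed (2 * C - x) (A + x - C) C - hseed (-x - 2 * A) A (C - A - x)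

/-- The weight `χ₄(A/2) (-1)^C` on `A ≡ 2 mod 4`, and zero elsewhere. -/
def gg (A C : ℤ) : ℤ :=
  if A % 4 = 2 then c4 (A / 2) * (if C % 2 = 0 then 1 else -1) else 0

/-- A correction weight in `hh_res`. It enters as a difference that cancels when a factor 2 is
moved from `C` to `A`. -/
def de (A C : ℤ) : ℤ :=
  if A % 4 = 0 then -2 * c4 C else if C % 4 = 0 then 2 * c4 A else
    if A * C % 4 = 3 then -2 * c4 A else 0

set_option maxRecDepth 100000 in
/-- The properties of `hh` used below, on residues modulo 8: antisymmetry under the two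
involutions, and, after summing over `x ↦ -x` and `A ↔ C`, agreement with `gg` up to corrections
whose sum vanishes. -/
lemma hh_res : ∀ x < 8, ∀ A < 8, ∀ C < 8, (x ^ 2 + 4 * A * C) % 8 = 1 →
    hh (2 * (C : ℕ) - (x : ℕ)) ((A : ℕ) + x - C) C = - hh x A C ∧
    hh (-x - 2 * A) A (C - A - x) = - hh x A C ∧
    hh x A C + hh (-x) A C + hh x C A + hh (-x) C A = 2 * (gg A C + gg C A)
      + ((if C % 2 = 0 then de A ((C / 2 : ℕ) : ℤ) else 0)
        - (if A % 2 = 0 then de ((A / 2 : ℕ) : ℤ) C else 0)) := by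
  decide +kernel

set_option maxRecDepth 100000 in
/-- The sum of `hh` over `A + x = C`, `A + C = u`, on residues modulo 8, and the sum over a full
period of `A`. -/
lemma hh_diag_res : ∀ u < 8, u % 2 = 1 →
    2 * ∑ A ∈ range u, hh ((u : ℕ) - 2 * (A : ℕ)) A (u - A) - 2 * hh u 0 u = c4 u * u - 1 ∧
    ∑ A ∈ range 8, hh ((u : ℕ) - 2 * (A : ℕ)) A (u - A) = 4 * c4 u := by
  decide +kernel

lemma hseed_congr {x A C x' A' C' : ℤ} (hx : x ≡ x' [ZMOD 8]) (hA : A ≡ A' [ZMOD 8])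
    (hC : C ≡ C' [ZMOD 8]) : hseed x A C = hseed x' A' C' := by
  have h1 : x * A % 8 = x' * A' % 8 := hx.mul hA
  have h2 : x * C % 8 = x' * C' % 8 := hx.mul hC
  unfold Int.ModEq at hx hA hC
  unfold hseed
  rw [show x % 2 = x' % 2 by omega, show A % 2 = A' % 2 by omega, show C % 2 = C' % 2 by omega,
    h1, h2, c4_congr (show x % 4 = x' % 4 by omega)]

lemma hh_congr {x A C x' A' C' : ℤ} (hx : x ≡ x' [ZMOD 8]) (hA : A ≡ A' [ZMOD 8])
    (hC : C ≡ C' [ZMOD 8]) : hh x A C = hh x' A' C' := by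
  unfold hh
  rw [hseed_congr hx hA hC, hseed_congr ((hC.mul_left 2).sub hx) ((hA.add hx).sub hC) hC,
    hseed_congr (hx.neg.sub (hA.mul_left 2)) hA ((hC.sub hA).sub hx)]

lemma gg_congr {A C A' C' : ℤ} (hA : A ≡ A' [ZMOD 8]) (hC : C ≡ C' [ZMOD 8]) :
    gg A C = gg A' C' := by
  unfold Int.ModEq at hA hC
  unfold gg
  rw [show A % 4 = A' % 4 by omega, show C % 2 = C' % 2 by omega,
    c4_congr (show A / 2 % 4 = A' / 2 % 4 by omega)]

lemma de_congr {A C A' C' : ℤ} (hA : A ≡ A' [ZMOD 4]) (hC : C ≡ C' [ZMOD 4]) :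
    de A C = de A' C' := by
  have h1 : A * C % 4 = A' * C' % 4 := hA.mul hC
  have hA' := hA
  have hC' := hC
  unfold Int.ModEq at hA' hC'
  unfold de
  rw [hA', hC', c4_congr hA, c4_congr hC, h1]

/-- The identities of `hh_res` for arbitrary integers. -/
lemma hh_point (x A C : ℤ) (h : (x ^ 2 + 4 * A * C) % 8 = 1) :
    hh (2 * C - x) (A + x - C) C = - hh x A C ∧
    hh (-x - 2 * A) A (C - A - x) = - hh x A C ∧
    hh x A C + hh (-x) A C + hh x C A + hh (-x) C A = 2 * (gg A C + gg C A)
      + ((if C % 2 = 0 then de A (C / 2) else 0) - (if A % 2 = 0 then de (A / 2) C else 0)) := by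
  have ex (u : ℤ) : ∃ v : ℕ, v < 8 ∧ (v : ℤ) ≡ u [ZMOD 8] :=
    ⟨(u % 8).toNat, by omega, by unfold Int.ModEq; omega⟩
  obtain ⟨x', hx', eX⟩ := ex x
  obtain ⟨A', hA', eA⟩ := ex A
  obtain ⟨C', hC', eC⟩ := ex C
  have h' : (x' ^ 2 + 4 * A' * C') % 8 = 1 := by
    have : ((x' : ℤ) ^ 2 + 4 * A' * C') % 8 = (x ^ 2 + 4 * A * C) % 8 :=
      (eX.pow 2).add ((eA.mul_left 4).mul eC)
    rw [h] at this
    exact_mod_cast this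
  obtain ⟨H1, H2, H3⟩ := hh_res x' hx' A' hA' C' hC' h'
  have e4 {u : ℤ} {u' : ℕ} (h : (u' : ℤ) ≡ u [ZMOD 8]) : (u' : ℤ) ≡ u [ZMOD 4] :=
    h.of_dvd (by norm_num)
  have e2 {u : ℤ} {u' : ℕ} (h : (u' : ℤ) ≡ u [ZMOD 8]) : ((u' / 2 : ℕ) : ℤ) ≡ u / 2 [ZMOD 4] := by
    unfold Int.ModEq at *; omega
  have p {u : ℤ} {u' : ℕ} (h : (u' : ℤ) ≡ u [ZMOD 8]) : (u' % 2 = 0) = (u % 2 = 0) :=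
    propext (by unfold Int.ModEq at h; omega)
  rw [hh_congr ((eC.mul_left 2).sub eX) ((eA.add eX).sub eC) eC, hh_congr eX eA eC] at H1
  rw [hh_congr (eX.neg.sub (eA.mul_left 2)) eA ((eC.sub eA).sub eX), hh_congr eX eA eC] at H2
  rw [hh_congr eX eA eC, hh_congr eX.neg eA eC, hh_congr eX eC eA, hh_congr eX.neg eC eA,
    gg_congr eA eC, gg_congr eC eA, de_congr (e4 eA) (e2 eC), de_congr (e2 eA) (e4 eC)] at H3
  exact ⟨H1, H2, by simpa only [p eA, p eC] using H3⟩

/-- The first involution preserves the region `C < A + x`, so the sum of `hh` over it vanishes. -/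
lemma Om_sum_phi {m : ℤ} (hm : m % 8 = 1) :
    ∑ v ∈ (Om m).filter (fun v => v.2.2 < v.2.1 + v.1), hh v.1 v.2.1 v.2.2 = 0 := by
  have : ∑ v ∈ (Om m).filter (fun v => v.2.2 < v.2.1 + v.1), hh v.1 v.2.1 v.2.2 =
      ∑ v ∈ (Om m).filter (fun v => v.2.2 < v.2.1 + v.1), -hh v.1 v.2.1 v.2.2 := by
    refine sum_nbij' (fun v => (2 * v.2.2 - v.1, v.2.1 + v.1 - v.2.2, v.2.2))
      (fun v => (2 * v.2.2 - v.1, v.2.1 + v.1 - v.2.2, v.2.2)) ?_ ?_ ?_ ?_ ?_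
    all_goals rintro ⟨x, A, C⟩ hv
    all_goals
      simp only [mem_filter, mem_Om] at hv ⊢
      obtain ⟨⟨hA, hC, e⟩, h⟩ := hv
    · exact ⟨⟨by omega, hC, by rw [← e]; ring⟩, by omega⟩
    · exact ⟨⟨by omega, hC, by rw [← e]; ring⟩, by omega⟩
    · simp only [Prod.mk.injEq, and_true]; omega
    · simp only [Prod.mk.injEq, and_true]; omega
    · rw [(hh_point x A C (by rw [e, hm])).1, neg_neg]
  rw [sum_neg_distrib] at this
  linarith

/-- The second involution preserves the region `A + x < C`, so the sum of `hh` over it vanishes. -/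
lemma Om_sum_psi {m : ℤ} (hm : m % 8 = 1) :
    ∑ v ∈ (Om m).filter (fun v => v.2.1 + v.1 < v.2.2), hh v.1 v.2.1 v.2.2 = 0 := by
  have : ∑ v ∈ (Om m).filter (fun v => v.2.1 + v.1 < v.2.2), hh v.1 v.2.1 v.2.2 =
      ∑ v ∈ (Om m).filter (fun v => v.2.1 + v.1 < v.2.2), -hh v.1 v.2.1 v.2.2 := by
    refine sum_nbij' (fun v => (-v.1 - 2 * v.2.1, v.2.1, v.2.2 - v.2.1 - v.1))
      (fun v => (-v.1 - 2 * v.2.1, v.2.1, v.2.2 - v.2.1 - v.1)) ?_ ?_ ?_ ?_ ?_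
    all_goals rintro ⟨x, A, C⟩ hv
    all_goals
      simp only [mem_filter, mem_Om] at hv ⊢
      obtain ⟨⟨hA, hC, e⟩, h⟩ := hv
    · exact ⟨⟨hA, by omega, by rw [← e]; ring⟩, by omega⟩
    · exact ⟨⟨hA, by omega, by rw [← e]; ring⟩, by omega⟩
    · simp only [Prod.mk.injEq, true_and]; omega
    · simp only [Prod.mk.injEq, true_and]; omega
    · rw [(hh_point x A C (by rw [e, hm])).2.1, neg_neg]
  rw [sum_neg_distrib] at this
  linarith

lemma Om_sum_swap (m : ℤ) (F : ℤ → ℤ → ℤ → ℤ) :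
    ∑ v ∈ Om m, F v.1 v.2.1 v.2.2 = ∑ v ∈ Om m, F v.1 v.2.2 v.2.1 := by
  refine sum_nbij' (fun v => (v.1, v.2.2, v.2.1)) (fun v => (v.1, v.2.2, v.2.1)) ?_ ?_ ?_ ?_ ?_
  all_goals rintro ⟨x, A, C⟩ hv
  all_goals try rfl
  all_goals
    simp only [mem_Om] at hv ⊢
    obtain ⟨hA, hC, e⟩ := hv
    exact ⟨hC, hA, by rw [← e]; ring⟩

lemma Om_sum_neg (m : ℤ) (F : ℤ → ℤ → ℤ → ℤ) :
    ∑ v ∈ Om m, F v.1 v.2.1 v.2.2 = ∑ v ∈ Om m, F (-v.1) v.2.1 v.2.2 := by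
  refine sum_nbij' (fun v => (-v.1, v.2.1, v.2.2)) (fun v => (-v.1, v.2.1, v.2.2)) ?_ ?_ ?_ ?_ ?_
  all_goals rintro ⟨x, A, C⟩ hv
  all_goals try simp only [neg_neg]
  all_goals
    simp only [mem_Om] at hv ⊢
    obtain ⟨hA, hC, e⟩ := hv
    exact ⟨hA, hC, by rw [← e]; ring⟩

/-- Moving a factor 2 from `C` to `A` is a bijection. -/
lemma Om_sum_half (m : ℤ) (F : ℤ → ℤ → ℤ) :
    ∑ v ∈ Om m, (if v.2.2 % 2 = 0 then F v.2.1 (v.2.2 / 2) else 0) =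
      ∑ v ∈ Om m, (if v.2.1 % 2 = 0 then F (v.2.1 / 2) v.2.2 else 0) := by
  rw [← sum_filter, ← sum_filter]
  refine sum_nbij' (fun v => (v.1, 2 * v.2.1, v.2.2 / 2)) (fun v => (v.1, v.2.1 / 2, 2 * v.2.2))
    ?_ ?_ ?_ ?_ ?_
  all_goals rintro ⟨x, A, C⟩ hv
  all_goals
    simp only [mem_filter, mem_Om] at hv ⊢
    obtain ⟨⟨hA, hC, e⟩, h2⟩ := hv
  · obtain ⟨k, rfl⟩ : ∃ k, C = 2 * k := ⟨C / 2, by omega⟩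
    refine ⟨⟨by omega, by omega, ?_⟩, by omega⟩
    rw [← e, Int.mul_ediv_cancel_left _ two_ne_zero]; ring
  · obtain ⟨k, rfl⟩ : ∃ k, A = 2 * k := ⟨A / 2, by omega⟩
    refine ⟨⟨by omega, by omega, ?_⟩, by omega⟩
    rw [← e, Int.mul_ediv_cancel_left _ two_ne_zero]; ring
  · simp only [Prod.mk.injEq, true_and]; omega
  · simp only [Prod.mk.injEq, true_and]; omega
  · congr 1; omega

lemma Om_sum_hh {m : ℤ} (hm : m % 8 = 1) :
    ∑ v ∈ Om m, hh v.1 v.2.1 v.2.2 = ∑ v ∈ Om m, gg v.2.1 v.2.2 := by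
  have h1 := Om_sum_neg m hh
  have h2 := Om_sum_swap m hh
  have h3 := Om_sum_swap m (fun x A C => hh (-x) A C)
  have h4 := Om_sum_swap m (fun _ A C => gg A C)
  have h5 := Om_sum_half m de
  have h6 := sum_congr (rfl : Om m = Om m) (fun v hv => (hh_point v.1 v.2.1 v.2.2
    (by rw [(mem_Om.1 hv).2.2, hm])).2.2)
  simp only [sum_add_distrib, sum_sub_distrib, ← mul_sum] at h6
  linarith

lemma sum_range_periodic8 (f : ℕ → ℤ) (hf : ∀ a, f (a + 8) = f a) (q r : ℕ) :
    ∑ a ∈ range (8 * q + r), f a = q * ∑ a ∈ range 8, f a + ∑ a ∈ range r, f a := by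
  induction q with
  | zero => simp
  | succ q ih =>
    rw [show 8 * (q + 1) + r = 8 + (8 * q + r) by ring, sum_range_add]
    have : ∀ a ∈ range (8 * q + r), f (8 + a) = f a := fun a _ => by rw [add_comm, hf]
    rw [sum_congr rfl this, ih]; push_cast; ring

/-- The contribution of the boundary `A + x = C`, on which `m = (A + C)²`, with `u = A + C`. -/
lemma hh_diag (u : ℕ) (hu : u % 2 = 1) :
    2 * ∑ A ∈ Ico 1 u, hh (u - 2 * A) A (u - A) = c4 u * u - 1 := by
  obtain ⟨H1, H2⟩ := hh_diag_res (u % 8) (by omega) (by omega)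
  have e : ((u % 8 : ℕ) : ℤ) ≡ u [ZMOD 8] := by unfold Int.ModEq; omega
  have hk : ∀ a : ℤ, hh ((u % 8 : ℕ) - 2 * a) a ((u % 8 : ℕ) - a) = hh (u - 2 * a) a (u - a) :=
    fun a => hh_congr (e.sub_right _) (Int.ModEq.refl _) (e.sub_right _)
  have hp : ∀ a : ℕ, hh ((u : ℤ) - 2 * (a + 8 : ℕ)) (a + 8 : ℕ) (u - (a + 8 : ℕ)) =
      hh (u - 2 * a) a (u - a) := fun a =>
    hh_congr (by unfold Int.ModEq; omega) (by unfold Int.ModEq; omega)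
      (by unfold Int.ModEq; omega)
  have h0 := hk 0
  have hP := sum_range_periodic8 (fun a => hh ((u : ℤ) - 2 * a) a (u - a)) hp (u / 8) (u % 8)
  rw [Nat.div_add_mod, range_eq_Ico, sum_eq_sum_Ico_succ_bot (by omega)] at hP
  simp only [hk] at H1 H2
  rw [H2] at hP
  simp only [mul_zero, sub_zero, Nat.cast_zero, zero_add] at hP h0
  rw [h0, c4_congr (a := (u % 8 : ℕ)) (b := u) (by omega)] at H1
  rw [c4_congr (a := (u % 8 : ℕ)) (b := u) (by omega)] at hP
  have e1 : (u : ℤ) = 8 * (u / 8 : ℕ) + (u % 8 : ℕ) := by omega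
  linear_combination 2 * hP + H1 - c4 u * e1

/-- An identity of Uspensky type, which evaluates the sum of `gg` over `x² + 4 A C = m`. The sum
of `hh` reduces to the common boundary `A + x = C` of the two regions preserved by the involutions,
and on that boundary `m = (A + C)²` is a square. -/
theorem uspensky {m : ℤ} (hm : m % 8 = 1) :
    ∑ u ∈ sqs m, c4 u * u = #(sqs m) + 4 * ∑ v ∈ Om m, gg v.2.1 v.2.2 := by
  have hpos : ∑ u ∈ (sqs m).filter (0 < ·), (c4 u * u - 1) =
      2 * ∑ v ∈ Om m, hh v.1 v.2.1 v.2.2 := by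
    have hs : ∑ v ∈ Om m, hh v.1 v.2.1 v.2.2 =
        ∑ v ∈ (Om m).filter (fun v => v.2.1 + v.1 = v.2.2), hh v.1 v.2.1 v.2.2 := by
      have h1 := Om_sum_psi hm
      have h2 := Om_sum_phi hm
      rw [sum_filter] at h1 h2 ⊢
      have h3 := congrArg₂ (· + ·) h1 h2
      simp only [← sum_add_distrib, add_zero] at h3
      rw [← add_zero (∑ v ∈ Om m, ite _ _ _), ← h3, ← sum_add_distrib]
      refine sum_congr rfl fun v _ => ?_
      split_ifs <;> omega
    have hb : ∑ v ∈ (Om m).filter (fun v => v.2.1 + v.1 = v.2.2), hh v.1 v.2.1 v.2.2 =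
        ∑ u ∈ (sqs m).filter (0 < ·), ∑ A ∈ Ico 1 u.toNat, hh (u - 2 * A) A (u - A) := by
      rw [sum_sigma']
      refine sum_bij' (fun v _ => ⟨v.2.1 + v.2.2, v.2.1.toNat⟩)
        (fun s _ => (s.1 - 2 * s.2, s.2, s.1 - s.2)) ?_ ?_ ?_ ?_ ?_
      · rintro ⟨x, A, C⟩ hv
        simp only [mem_filter, mem_Om] at hv
        obtain ⟨⟨hA, hC, e⟩, rfl⟩ := hv
        simp only [mem_sigma, mem_filter, mem_sqs, mem_Ico]
        exact ⟨⟨by rw [← e]; ring, by omega⟩, by omega, by omega⟩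
      · rintro ⟨u, A⟩ hs
        simp only [mem_sigma, mem_filter, mem_sqs, mem_Ico] at hs
        obtain ⟨⟨e, hu⟩, hA, hB⟩ := hs
        simp only [mem_filter, mem_Om]
        exact ⟨⟨by omega, by omega, by rw [← e]; ring⟩, by ring⟩
      · rintro ⟨x, A, C⟩ hv
        simp only [mem_filter, mem_Om] at hv
        obtain ⟨⟨hA, hC, e⟩, rfl⟩ := hv
        simp only [Prod.mk.injEq]
        omega
      · rintro ⟨u, A⟩ hs
        simp
      · rintro ⟨x, A, C⟩ hv
        simp only [mem_filter, mem_Om] at hv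
        obtain ⟨⟨hA, hC, e⟩, rfl⟩ := hv
        congr 1 <;> simp only [] <;> omega
    rw [hs, hb, mul_sum]
    refine sum_congr rfl fun u hu => ?_
    simp only [mem_filter, mem_sqs] at hu
    obtain ⟨v, rfl⟩ : ∃ v : ℕ, u = v := ⟨u.toNat, by omega⟩
    have : v % 2 = 1 := by
      by_contra h
      obtain ⟨k, rfl⟩ : ∃ k, v = 2 * k := ⟨v / 2, by omega⟩
      have := hu.1
      push_cast at this
      ring_nf at this
      omega
    rw [← hh_diag v this, Int.toNat_natCast]
  have hneg : ∑ u ∈ sqs m, (c4 u * u - 1) = 2 * ∑ u ∈ (sqs m).filter (0 < ·), (c4 u * u - 1) := by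
    rw [← sum_filter_add_sum_filter_not (sqs m) (0 < ·), two_mul]
    congr 1
    refine sum_nbij' (fun u => -u) (fun u => -u) ?_ ?_ ?_ ?_ ?_
    · intro u hu
      simp only [mem_filter, mem_sqs] at hu ⊢
      refine ⟨by rw [← hu.1]; ring, ?_⟩
      rcases eq_or_ne u 0 with rfl | h
      · omega
      · omega
    · intro u hu
      simp only [mem_filter, mem_sqs] at hu ⊢
      exact ⟨by rw [← hu.1]; ring, by omega⟩
    · simp
    · simp
    · intro u _; rw [c4_neg]; ring
  rw [hpos, Om_sum_hh hm, sum_sub_distrib, sum_const, nsmul_one] at hneg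
  linarith

/-! ### Representations by `x² + N y²` and Hecke recursions -/

lemma c3_mul (a b : ℤ) : c3 (a * b) = c3 a * c3 b := by
  have h := Int.mul_emod a b 3
  unfold c3
  have ha := Int.emod_nonneg a (show (3:ℤ) ≠ 0 by norm_num)
  have hb := Int.emod_nonneg b (show (3:ℤ) ≠ 0 by norm_num)
  have ha' := Int.emod_lt_of_pos a (show (3:ℤ) > 0 by norm_num)
  have hb' := Int.emod_lt_of_pos b (show (3:ℤ) > 0 by norm_num)
  rw [h]
  generalize a % 3 = r at *
  generalize b % 3 = s at *
  interval_cases r <;> interval_cases s <;> norm_num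

lemma c4_mul (a b : ℤ) : c4 (a * b) = c4 a * c4 b := by
  have h := Int.mul_emod a b 4
  unfold c4
  have ha := Int.emod_nonneg a (show (4:ℤ) ≠ 0 by norm_num)
  have hb := Int.emod_nonneg b (show (4:ℤ) ≠ 0 by norm_num)
  have ha' := Int.emod_lt_of_pos a (show (4:ℤ) > 0 by norm_num)
  have hb' := Int.emod_lt_of_pos b (show (4:ℤ) > 0 by norm_num)
  rw [h]
  generalize a % 4 = r at *
  generalize b % 4 = s at *
  interval_cases r <;> interval_cases s <;> norm_num

lemma sum_div_dvd (χ : ℤ → ℤ) (hχ : ∀ a b, χ (a * b) = χ a * χ b) {p n : ℕ} (hp : 0 < p) :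
    ∑ d ∈ (p * n).divisors.filter (p ∣ ·), χ d = χ p * ∑ d ∈ n.divisors, χ d := by
  rw [mul_sum]
  refine sum_nbij' (fun d => d / p) (fun d => p * d) ?_ ?_ ?_ ?_ ?_
  · intro d hd
    simp only [mem_filter, Nat.mem_divisors] at hd ⊢
    obtain ⟨⟨h1, h2⟩, k, rfl⟩ := hd
    rw [Nat.mul_div_cancel_left _ hp]
    exact ⟨Nat.dvd_of_mul_dvd_mul_left hp h1, right_ne_zero_of_mul h2⟩
  · intro d hd
    simp only [mem_filter, Nat.mem_divisors] at hd ⊢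
    exact ⟨⟨Nat.mul_dvd_mul_left _ hd.1, mul_ne_zero hp.ne' hd.2⟩, dvd_mul_right _ _⟩
  · intro d hd
    simp only [mem_filter] at hd
    exact Nat.mul_div_cancel' hd.2
  · intro d hd
    exact Nat.mul_div_cancel_left _ hp
  · intro d hd
    simp only [mem_filter] at hd
    obtain ⟨_, k, rfl⟩ := hd
    rw [Nat.mul_div_cancel_left _ hp, Nat.cast_mul, hχ]

/-- The Hecke recursion of the divisor sum of a completely multiplicative `χ`. -/
lemma divSum_rec (χ : ℤ → ℤ) (hχ : ∀ a b, χ (a * b) = χ a * χ b) {p n : ℕ} (hp : p.Prime)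
    (hn : 0 < n) : ∑ d ∈ (p * n).divisors, χ d = (1 + χ p) * ∑ d ∈ n.divisors, χ d
      - χ p * (if p ∣ n then ∑ d ∈ (n / p).divisors, χ d else 0) := by
  have h1 : (p * n).divisors.filter (fun d => ¬ p ∣ d) = n.divisors.filter (fun d => ¬ p ∣ d) := by
    ext d
    simp only [mem_filter, Nat.mem_divisors]
    constructor
    · rintro ⟨⟨h, h0⟩, hd⟩
      exact ⟨⟨((hp.coprime_iff_not_dvd.2 hd).symm).dvd_of_dvd_mul_left h, hn.ne'⟩, hd⟩
    · rintro ⟨⟨h, h0⟩, hd⟩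
      exact ⟨⟨h.mul_left p, mul_ne_zero hp.ne_zero h0⟩, hd⟩
  have h2 : ∑ d ∈ n.divisors.filter (p ∣ ·), χ d =
      χ p * (if p ∣ n then ∑ d ∈ (n / p).divisors, χ d else 0) := by
    split_ifs with h
    · obtain ⟨k, rfl⟩ := h
      rw [Nat.mul_div_cancel_left _ hp.pos, sum_div_dvd χ hχ hp.pos]
    · rw [mul_zero]
      refine sum_eq_zero fun d hd => ?_
      simp only [mem_filter, Nat.mem_divisors] at hd
      exact absurd (hd.2.trans hd.1.1) h
  have h3 := sum_filter_add_sum_filter_not n.divisors (p ∣ ·) (fun d => χ d)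
  rw [← sum_filter_add_sum_filter_not (p * n).divisors (p ∣ ·), sum_div_dvd χ hχ hp.pos, h1, ← h2]
  linarith

/-- A function of odd `n` satisfying the same Hecke recursion as the divisor sum of `χ` is a
multiple of it. The induction removes the least prime factor. -/
lemma eq_mul_divSum (χ : ℤ → ℤ) (hχ : ∀ a b, χ (a * b) = χ a * χ b) (h1 : χ 1 = 1) (r : ℕ → ℤ)
    (hr : ∀ p n : ℕ, p.Prime → p % 2 = 1 → 0 < n →
      r (p * n) = (1 + χ p) * r n - χ p * (if p ∣ n then r (n / p) else 0)) :
    ∀ n : ℕ, n % 2 = 1 → r n = r 1 * ∑ d ∈ n.divisors, χ d := by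
  intro n
  induction n using Nat.strong_induction_on with
  | _ n ih =>
    intro hn
    rcases eq_or_ne n 1 with rfl | hn1
    · simp [h1]
    have hp := Nat.minFac_prime hn1
    obtain ⟨k, hk⟩ := Nat.minFac_dvd n
    set p := n.minFac
    have hp2 : p % 2 = 1 := by
      by_contra h
      have : 2 ∣ n := (show 2 ∣ p by omega).trans (Nat.minFac_dvd n)
      omega
    have hk0 : 0 < k := by
      rcases Nat.eq_zero_or_pos k with rfl | h
      · omega
      · exact h
    have hk2 : k % 2 = 1 := by
      by_contra h
      have : 2 ∣ n := hk ▸ (show 2 ∣ k by omega).mul_left p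
      omega
    have hkn : k < n := by rw [hk]; nlinarith [hp.two_le]
    rw [hk, hr p k hp hp2 hk0, divSum_rec χ hχ hp hk0, ih k hkn hk2]
    split_ifs with h
    · obtain ⟨l, rfl⟩ := h
      rw [Nat.mul_div_cancel_left _ hp.pos, ih l (by nlinarith [hp.two_le]) ?_]
      · ring
      · by_contra h
        have : 2 ∣ p * l := (show 2 ∣ l by omega).mul_left p
        omega
    · ring

/-- The representations `m = x² + N y²`, for `N > 0`. The box contains all of them when `N` is
positive. -/
noncomputable def reps (N m : ℤ) : Finset (ℤ × ℤ) :=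
  (Icc (-m) m ×ˢ Icc (-m) m).filter fun v => v.1 ^ 2 + N * v.2 ^ 2 = m

lemma mem_reps {N m : ℤ} (hN : 0 < N) {v : ℤ × ℤ} : v ∈ reps N m ↔ v.1 ^ 2 + N * v.2 ^ 2 = m := by
  obtain ⟨x, y⟩ := v
  simp only [reps, mem_filter, mem_product, mem_Icc, and_iff_right_iff_imp]
  rintro rfl
  have hx := Int.le_self_sq x
  have hx' := Int.le_self_sq (-x)
  have hy := Int.le_self_sq y
  have hy' := Int.le_self_sq (-y)
  have h1 : y ^ 2 ≤ N * y ^ 2 := by nlinarith [sq_nonneg y]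
  have h2 : 0 ≤ y ^ 2 := sq_nonneg y
  have h3 : 0 ≤ x ^ 2 := sq_nonneg x
  rw [neg_sq] at hx' hy'
  refine ⟨⟨?_, ?_⟩, ?_, ?_⟩ <;> linarith

/-- The imprimitive representations of `p n`, those with `p ∣ x` and `p ∣ y`. -/
lemma card_reps_p {N : ℤ} (hN : 0 < N) {p n : ℕ} (hp : 0 < p) :
    (#((reps N (p * n)).filter fun v => (p : ℤ) ∣ v.1 ∧ (p : ℤ) ∣ v.2) : ℤ) =
      if p ∣ n then (#(reps N (n / p : ℕ)) : ℤ) else 0 := by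
  have hp0 : (p : ℤ) ≠ 0 := by positivity
  split_ifs with h
  · obtain ⟨k, rfl⟩ := h
    rw [Nat.mul_div_cancel_left _ hp]
    congr 1
    refine card_nbij' (fun v => (v.1 / p, v.2 / p)) (fun v => (p * v.1, p * v.2)) ?_ ?_ ?_ ?_
    · rintro ⟨x, y⟩ hv
      simp only [mem_coe, mem_filter, mem_reps hN] at hv ⊢
      obtain ⟨h, ⟨s, rfl⟩, ⟨t, rfl⟩⟩ := hv
      rw [Int.mul_ediv_cancel_left _ hp0, Int.mul_ediv_cancel_left _ hp0]
      push_cast at h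
      have : (p : ℤ) ^ 2 * (s ^ 2 + N * t ^ 2) = p ^ 2 * k := by linear_combination h
      exact mul_left_cancel₀ (pow_ne_zero 2 hp0) this
    · rintro ⟨x, y⟩ hv
      simp only [mem_coe, mem_filter, mem_reps hN] at hv ⊢
      refine ⟨?_, dvd_mul_right _ _, dvd_mul_right _ _⟩
      push_cast
      rw [← hv]; ring
    · rintro ⟨x, y⟩ hv
      simp only [mem_coe, mem_filter, mem_reps hN] at hv ⊢
      rw [Int.mul_ediv_cancel' hv.2.1, Int.mul_ediv_cancel' hv.2.2]
    · rintro ⟨x, y⟩ hv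
      simp only [Int.mul_ediv_cancel_left _ hp0]
  · rw [Nat.cast_eq_zero, card_eq_zero, filter_eq_empty_iff]
    rintro ⟨x, y⟩ hv ⟨⟨s, hs⟩, ⟨t, ht⟩⟩
    rw [mem_reps hN] at hv
    simp only at hs ht hv
    subst hs ht
    apply h
    have : (p : ℤ) * (p * (s ^ 2 + N * t ^ 2)) = p * n := by linear_combination hv
    exact Int.natCast_dvd_natCast.1 ⟨_, (mul_left_cancel₀ hp0 this).symm⟩

/-- The recursion at a prime `p` that is inert in `ℚ(√-N)`. -/
lemma card_reps_inert {N : ℤ} (hN : 0 < N) {p n : ℕ} (hp : 0 < p)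
    (h : ∀ x y : ℤ, (p : ℤ) ∣ x ^ 2 + N * y ^ 2 → (p : ℤ) ∣ x ∧ (p : ℤ) ∣ y) :
    (#(reps N (p * n)) : ℤ) = if p ∣ n then (#(reps N (n / p : ℕ)) : ℤ) else 0 := by
  rw [← card_reps_p hN hp, filter_true_of_mem]
  rintro ⟨x, y⟩ hv
  rw [mem_reps hN] at hv
  exact h x y ⟨_, hv⟩

/-- Multiplication by `a + b √-N`, an element of norm `p`, is a bijection from the representations
of `n` to the representations `(x, y)` of `p n` with `p ∣ a y - b x`. -/
lemma card_reps_div {N : ℤ} (hN : 0 < N) {p n : ℕ} (hp : p.Prime) {a b : ℤ}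
    (hab : a ^ 2 + N * b ^ 2 = p) (ha : ¬ (p : ℤ) ∣ a) :
    #((reps N (p * n)).filter fun v => (p : ℤ) ∣ a * v.2 - b * v.1) = #(reps N n) := by
  have hp0 : (p : ℤ) ≠ 0 := by exact_mod_cast hp.ne_zero
  have hpp : Prime (p : ℤ) := Nat.prime_iff_prime_int.1 hp
  refine card_nbij' (fun v => ((a * v.1 + N * b * v.2) / p, (a * v.2 - b * v.1) / p))
    (fun v => (a * v.1 - N * b * v.2, a * v.2 + b * v.1)) ?_ ?_ ?_ ?_
  · rintro ⟨x, y⟩ hv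
    simp only [mem_coe, mem_filter, mem_reps hN] at hv ⊢
    obtain ⟨h, ⟨t, ht⟩⟩ := hv
    have hs : (p : ℤ) ∣ a * x + N * b * y := by
      refine (hpp.dvd_or_dvd (a := a) ⟨x + N * b * t, ?_⟩).resolve_left ha
      linear_combination x * hab + N * b * ht
    obtain ⟨s, hs⟩ := hs
    rw [hs, ht, Int.mul_ediv_cancel_left _ hp0, Int.mul_ediv_cancel_left _ hp0]
    refine mul_left_cancel₀ (pow_ne_zero 2 hp0) ?_
    linear_combination (-(p * s) - (a * x + N * b * y)) * hs
      + N * (- (p * t) - (a * y - b * x)) * ht + (x ^ 2 + N * y ^ 2) * hab + p * h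
  · rintro ⟨x, y⟩ hv
    simp only [mem_coe, mem_filter, mem_reps hN] at hv ⊢
    refine ⟨?_, y, ?_⟩
    · rw [← hv, ← hab]; ring
    · rw [← hab]; ring
  · rintro ⟨x, y⟩ hv
    simp only [mem_coe, mem_filter, mem_reps hN] at hv ⊢
    obtain ⟨h, ⟨t, ht⟩⟩ := hv
    have hs : (p : ℤ) ∣ a * x + N * b * y := by
      refine (hpp.dvd_or_dvd (a := a) ⟨x + N * b * t, ?_⟩).resolve_left ha
      linear_combination x * hab + N * b * ht
    obtain ⟨s, hs⟩ := hs
    rw [hs, ht, Int.mul_ediv_cancel_left _ hp0, Int.mul_ediv_cancel_left _ hp0, Prod.mk.injEq]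
    constructor
    · refine mul_left_cancel₀ hp0 ?_
      linear_combination -a * hs + N * b * ht + x * hab
    · refine mul_left_cancel₀ hp0 ?_
      linear_combination -b * hs - a * ht + y * hab
  · rintro ⟨x, y⟩ hv
    have h1 : a * (a * x - N * b * y) + N * b * (a * y + b * x) = p * x := by rw [← hab]; ring
    have h2 : a * (a * y + b * x) - b * (a * x - N * b * y) = p * y := by rw [← hab]; ring
    simp only [h1, h2, Int.mul_ediv_cancel_left _ hp0]

/-- The recursion at a prime `p = a² + N b²`: every representation of `p n` is divisible by
`a + b √-N` or by its conjugate, and by both exactly when it is imprimitive. -/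
lemma card_reps_split {N : ℤ} (hN : 0 < N) {p n : ℕ} (hp : p.Prime) (hp2 : p % 2 = 1) {a b : ℤ}
    (hab : a ^ 2 + N * b ^ 2 = p) (ha : ¬ (p : ℤ) ∣ a) (hb : ¬ (p : ℤ) ∣ b) :
    (#(reps N (p * n)) : ℤ) = 2 * #(reps N n)
      - if p ∣ n then (#(reps N (n / p : ℕ)) : ℤ) else 0 := by
  have hpp : Prime (p : ℤ) := Nat.prime_iff_prime_int.1 hp
  have hp2' : ¬ (p : ℤ) ∣ 2 := by
    intro h
    have := Int.le_of_dvd two_pos h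
    have := hp.two_le
    omega
  have h1 := card_reps_div hN (n := n) hp hab ha
  have h2 := card_reps_div hN (n := n) hp (b := -b) (by rw [← hab]; ring) ha
  have h3 := card_union_add_card_inter
    ((reps N (p * n)).filter fun v => (p : ℤ) ∣ a * v.2 - b * v.1)
    ((reps N (p * n)).filter fun v => (p : ℤ) ∣ a * v.2 - -b * v.1)
  rw [← filter_or, ← filter_and, h1, h2, filter_true_of_mem, filter_congr (q := fun v =>
    (p : ℤ) ∣ v.1 ∧ (p : ℤ) ∣ v.2)] at h3
  · rw [← card_reps_p hN hp.pos]; linarith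
  · rintro ⟨x, y⟩ hv
    simp only
    constructor
    · rintro ⟨q1, q2⟩
      constructor
      · have := dvd_sub q2 q1
        rw [show a * y - -b * x - (a * y - b * x) = 2 * (b * x) by ring] at this
        exact ((hpp.dvd_or_dvd this).resolve_left hp2' |> hpp.dvd_or_dvd).resolve_left hb
      · have := dvd_add q2 q1
        rw [show a * y - -b * x + (a * y - b * x) = 2 * (a * y) by ring] at this
        exact ((hpp.dvd_or_dvd this).resolve_left hp2' |> hpp.dvd_or_dvd).resolve_left ha
    · rintro ⟨q1, q2⟩
      exact ⟨dvd_sub (q2.mul_left _) (q1.mul_left _), dvd_sub (q2.mul_left _) (q1.mul_left _)⟩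
  · rintro ⟨x, y⟩ hv
    rw [mem_reps hN] at hv
    simp only at hv ⊢
    apply hpp.dvd_or_dvd
    exact ⟨y ^ 2 - b ^ 2 * n, by linear_combination y ^ 2 * hab - b ^ 2 * hv⟩

/-! ### The forms `x² + y²` and `x² + 3 y²` -/

/-- If `g` is a primitive cube root of unity modulo `p`, then `(2 g + 1)² = -3`. -/
lemma sqrt_neg_three {p : ℕ} (hp : p.Prime) (h : p % 3 = 1) : ∃ s : ZMod p, s ^ 2 = -3 := by
  have := Fact.mk hp
  have h3 : 3 ∣ Fintype.card (ZMod p)ˣ := by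
    rw [ZMod.card_units_eq_totient, Nat.totient_prime hp]; omega
  have : Fact (Nat.Prime 3) := ⟨Nat.prime_three⟩
  obtain ⟨g, hg⟩ := exists_prime_orderOf_dvd_card 3 h3
  have hg3 : (g : ZMod p) ^ 3 = 1 := by
    have := pow_orderOf_eq_one g
    rw [hg] at this
    rw [← Units.val_pow_eq_pow_val, this, Units.val_one]
  have hg1 : (g : ZMod p) - 1 ≠ 0 := by
    intro h
    have : g = 1 := Units.ext (sub_eq_zero.1 h)
    rw [this, orderOf_one] at hg
    omega
  refine ⟨2 * g + 1, ?_⟩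
  have : ((g : ZMod p) - 1) * (g ^ 2 + g + 1) = 0 := by linear_combination hg3
  have := (mul_eq_zero.1 this).resolve_left hg1
  linear_combination 4 * this

/-- Thue's lemma: the congruence `x ≡ s y` modulo `p` has a nonzero solution with
`|x|, |y| < √p`. -/
lemma thue {p : ℕ} (hp : p.Prime) (s : ZMod p) :
    ∃ x y : ℤ, (x ≠ 0 ∨ y ≠ 0) ∧ (x : ZMod p) = s * y ∧ x ^ 2 < p ∧ y ^ 2 < p := by
  have := Fact.mk hp
  set k := Nat.sqrt p
  have hk1 : k * k < p := by
    refine lt_of_le_of_ne (Nat.sqrt_le p) fun h => ?_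
    have h1 : k ∣ p := ⟨k, h.symm⟩
    rcases (Nat.dvd_prime hp).1 h1 with h2 | h2
    · rw [h2] at h; exact hp.one_lt.ne h
    · rw [h2] at h; nlinarith [hp.two_le]
  have hk2 : p < (k + 1) * (k + 1) := Nat.lt_succ_sqrt p
  obtain ⟨u, hu, v, hv, huv, e⟩ := exists_ne_map_eq_of_card_lt_of_maps_to
    (s := range (k + 1) ×ˢ range (k + 1)) (t := (univ : Finset (ZMod p)))
    (by rw [card_product, card_range, card_univ, ZMod.card]; exact hk2)
    (f := fun v => (v.1 : ZMod p) - s * v.2) (fun _ _ => mem_coe.2 (mem_univ _))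
  simp only [mem_product, mem_range] at hu hv
  refine ⟨u.1 - v.1, u.2 - v.2, ?_, ?_, ?_, ?_⟩
  · by_contra! h
    exact huv (Prod.ext (by omega) (by omega))
  · push_cast
    linear_combination e
  · have : ((k * k : ℕ) : ℤ) < p := by exact_mod_cast hk1
    push_cast at this
    have h1 : |(u.1 : ℤ) - v.1| ≤ k := abs_le.2 ⟨by omega, by omega⟩
    have := sq_le_sq' (abs_le.1 h1).1 (abs_le.1 h1).2
    nlinarith
  · have : ((k * k : ℕ) : ℤ) < p := by exact_mod_cast hk1
    push_cast at this
    have h1 : |(u.2 : ℤ) - v.2| ≤ k := abs_le.2 ⟨by omega, by omega⟩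
    have := sq_le_sq' (abs_le.1 h1).1 (abs_le.1 h1).2
    nlinarith

lemma prime_eq_sq_add_three {p : ℕ} (hp : p.Prime) (hp2 : p % 2 = 1) (h : p % 3 = 1) :
    ∃ a b : ℤ, a ^ 2 + 3 * b ^ 2 = p := by
  obtain ⟨s, hs⟩ := sqrt_neg_three hp h
  obtain ⟨x, y, h0, hxy, hx, hy⟩ := thue hp s
  have hd : (p : ℤ) ∣ x ^ 2 + 3 * y ^ 2 := by
    rw [← ZMod.intCast_zmod_eq_zero_iff_dvd]
    push_cast
    rw [hxy]
    linear_combination (y : ZMod p) ^ 2 * hs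
  obtain ⟨m, hm⟩ := hd
  have hpos : 0 < x ^ 2 + 3 * y ^ 2 := by
    rcases h0 with h | h <;> positivity
  have hp0 : (0 : ℤ) < p := by exact_mod_cast hp.pos
  have hm0 : 0 < m := by
    rw [hm] at hpos
    exact (mul_pos_iff_of_pos_left hp0).1 hpos
  have hm4 : m < 4 := by nlinarith
  interval_cases m
  · exact ⟨x, y, by linarith⟩
  -- `x² + 3 y² = 2 p` is impossible modulo 4.
  · exfalso
    have e : (x ^ 2 + 3 * y ^ 2) % 4 = 2 := by omega
    rcases Int.even_or_odd' x with ⟨c, rfl | rfl⟩ <;> rcases Int.even_or_odd' y with ⟨d, rfl | rfl⟩ <;>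
    · ring_nf at e
      omega
  · have h3 : (3 : ℤ) ∣ x := by
      refine Int.prime_three.dvd_of_dvd_pow (n := 2) ⟨p - y ^ 2, by linarith⟩
    obtain ⟨t, rfl⟩ := h3
    exact ⟨y, t, by linarith⟩

lemma not_dvd_of_eq {N : ℤ} {p : ℕ} (hp : p.Prime) (hpN : ¬ (p : ℤ) ∣ N) {a b : ℤ}
    (hab : a ^ 2 + N * b ^ 2 = p) : ¬ (p : ℤ) ∣ a ∧ ¬ (p : ℤ) ∣ b := by
  have hpp : Prime (p : ℤ) := Nat.prime_iff_prime_int.1 hp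
  have key : ¬ ((p : ℤ) ∣ a ∧ (p : ℤ) ∣ b) := by
    rintro ⟨⟨s, rfl⟩, ⟨t, rfl⟩⟩
    have : (p : ℤ) * (s ^ 2 + N * t ^ 2) = 1 := by
      refine mul_left_cancel₀ hpp.ne_zero ?_
      linear_combination hab
    exact hpp.not_isUnit (IsUnit.of_mul_eq_one _ this)
  constructor
  · intro ha
    refine key ⟨ha, ?_⟩
    have : (p : ℤ) ∣ N * b ^ 2 := by
      rw [← dvd_add_right (ha.pow two_ne_zero), hab]
    exact hpp.dvd_of_dvd_pow ((hpp.dvd_or_dvd this).resolve_left hpN)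
  · intro hb
    refine key ⟨?_, hb⟩
    have : (p : ℤ) ∣ a ^ 2 := by
      rw [← dvd_add_left ((hb.pow two_ne_zero).mul_left N), hab]
    exact hpp.dvd_of_dvd_pow this

lemma inert_of_not_sq {N : ℤ} {p : ℕ} (hp : p.Prime) (h : ∀ s : ZMod p, s ^ 2 ≠ -N) (x y : ℤ)
    (hd : (p : ℤ) ∣ x ^ 2 + N * y ^ 2) : (p : ℤ) ∣ x ∧ (p : ℤ) ∣ y := by
  have := Fact.mk hp
  simp only [← ZMod.intCast_zmod_eq_zero_iff_dvd] at hd ⊢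
  push_cast at hd
  by_cases hy : (y : ZMod p) = 0
  · rw [hy] at hd
    exact ⟨pow_eq_zero_iff two_ne_zero |>.1 (by linear_combination hd), hy⟩
  · exfalso
    apply h (x / y)
    field_simp
    linear_combination hd

/-- For `p ≡ 2 mod 3` there is no primitive cube root of unity modulo `p`, hence no square root
of `-3`. -/
lemma neg_three_not_sq {p : ℕ} (hp : p.Prime) (hp2 : p % 2 = 1) (h : p % 3 = 2) (s : ZMod p) :
    s ^ 2 ≠ -(3 : ℤ) := by
  have := Fact.mk hp
  intro hs
  push_cast at hs
  have h2 : (2 : ZMod p) ≠ 0 := by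
    intro h
    have : ((2 : ℕ) : ZMod p) = 0 := by exact_mod_cast h
    rw [ZMod.natCast_eq_zero_iff] at this
    have := Nat.le_of_dvd two_pos this
    have := hp.two_le
    omega
  have h3 : (3 : ZMod p) ≠ 0 := by
    intro h
    have : ((3 : ℕ) : ZMod p) = 0 := by exact_mod_cast h
    rw [ZMod.natCast_eq_zero_iff] at this
    rw [Nat.prime_dvd_prime_iff_eq hp Nat.prime_three] at this
    omega
  set g : ZMod p := (s - 1) / 2 with hg
  have hg2 : g ^ 2 + g + 1 = 0 := by
    rw [hg]; field_simp; linear_combination hs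
  have hg3 : g ^ 3 = 1 := by linear_combination (g - 1) * hg2
  have hg1 : g ≠ 1 := by
    intro h; rw [h] at hg2; apply h3; linear_combination hg2
  have ho := orderOf_eq_prime hg3 hg1
  have hg0 : g ≠ 0 := by rintro h; rw [h] at hg3; simp at hg3
  have := ZMod.orderOf_dvd_card_sub_one hg0
  rw [ho] at this
  have := hp.two_le
  omega

/-- Jacobi's two-square theorem for odd `n`. -/
theorem card_reps_one (n : ℕ) (hn : n % 2 = 1) : (#(reps 1 n) : ℤ) = 4 * ∑ d ∈ n.divisors, c4 d := by
  have h1 : #(reps 1 ((1 : ℕ) : ℤ)) = 4 := by decide +kernel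
  rw [eq_mul_divSum c4 c4_mul rfl (fun n => #(reps 1 n)) ?_ n hn, h1]; · rfl
  intro p n hp hp2 hn
  push_cast
  rcases (show p % 4 = 1 ∨ p % 4 = 3 by omega) with h | h
  · have := Fact.mk hp
    obtain ⟨a, b, hab⟩ := Nat.Prime.sq_add_sq (p := p) (by omega)
    have hab' : (a : ℤ) ^ 2 + 1 * b ^ 2 = p := by rw [one_mul]; exact_mod_cast hab
    obtain ⟨ha, hb⟩ := not_dvd_of_eq hp
      (fun h => (Nat.prime_iff_prime_int.1 hp).not_isUnit (isUnit_of_dvd_one h)) hab'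
    rw [card_reps_split one_pos hp hp2 hab' ha hb,
      show c4 p = 1 by unfold c4; rw [if_pos (by omega)]]
    push_cast; ring
  · have := Fact.mk hp
    rw [card_reps_inert one_pos hp.pos (inert_of_not_sq hp ?_),
      show c4 p = -1 by unfold c4; rw [if_neg (by omega), if_pos (by omega)]]
    · push_cast; ring
    · intro s hs
      push_cast at hs
      exact ZMod.mod_four_ne_three_of_sq_eq_neg_one hs h

/-- Dirichlet's formula for the number of representations of an odd `n` by `x² + 3 y²`. -/
theorem card_reps_three (n : ℕ) (hn : n % 2 = 1) :
    (#(reps 3 n) : ℤ) = 2 * ∑ d ∈ n.divisors, c3 d := by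
  have h1 : #(reps 3 ((1 : ℕ) : ℤ)) = 2 := by decide +kernel
  rw [eq_mul_divSum c3 c3_mul rfl (fun n => #(reps 3 n)) ?_ n hn, h1]; · rfl
  intro p n hp hp2 hn
  push_cast
  rcases (show p % 3 = 0 ∨ p % 3 = 1 ∨ p % 3 = 2 by omega) with h | h | h
  · obtain rfl : 3 = p := (Nat.prime_dvd_prime_iff_eq Nat.prime_three hp).1 (Nat.dvd_of_mod_eq_zero h)
    rw [show c3 (3 : ℕ) = 0 from rfl, zero_mul, sub_zero, add_zero, one_mul]
    congr 1
    refine card_nbij' (fun v => (v.2, v.1 / 3)) (fun v => (3 * v.2, v.1)) ?_ ?_ ?_ ?_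
    all_goals rintro ⟨x, y⟩ hv
    all_goals simp only [mem_coe, mem_reps three_pos] at hv ⊢
    · have h3 : (3 : ℤ) ∣ x :=
        Int.prime_three.dvd_of_dvd_pow (n := 2) ⟨n - y ^ 2, by push_cast at hv; linarith⟩
      obtain ⟨t, rfl⟩ := h3
      rw [Int.mul_ediv_cancel_left _ three_ne_zero]
      push_cast at hv
      linarith
    · rw [← hv]; push_cast; ring
    · have h3 : (3 : ℤ) ∣ x :=
        Int.prime_three.dvd_of_dvd_pow (n := 2) ⟨n - y ^ 2, by push_cast at hv; linarith⟩
      rw [Int.mul_ediv_cancel' h3]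
    · rw [Int.mul_ediv_cancel_left _ three_ne_zero]
  · obtain ⟨a, b, hab⟩ := prime_eq_sq_add_three hp hp2 h
    obtain ⟨ha, hb⟩ := not_dvd_of_eq hp
      (fun h' => by
        have := (Nat.prime_dvd_prime_iff_eq hp Nat.prime_three).1 (by exact_mod_cast h')
        omega) hab
    rw [card_reps_split three_pos hp hp2 hab ha hb,
      show c3 p = 1 by unfold c3; rw [if_pos (by omega)]]
    push_cast; ring
  · rw [card_reps_inert three_pos hp.pos (inert_of_not_sq hp (neg_three_not_sq hp hp2 h)),
      show c3 p = -1 by unfold c3; rw [if_neg (by omega), if_pos (by omega)]]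
    push_cast; ring

/-! ### Triangular numbers and the quaternary form -/

lemma two_mul_tri (x : ℤ) : 2 * (x * (x - 1) / 2) = x * (x - 1) := by
  refine Int.mul_ediv_cancel' ?_
  have := Int.even_mul_succ_self (x - 1)
  rw [show (x - 1) * (x - 1 + 1) = x * (x - 1) by ring] at this
  exact this.two_dvd

/-- The odd `m` with `2 m < M`: the possible values of `s² + t²` in `M = u² + 3 v² + 2 (s² + t²)`. -/
def idxT (M : ℕ) : Finset ℕ := (range M).filter fun m => m % 2 = 1 ∧ 2 * m < M

lemma sq_mod8 (u : ℤ) : (u % 2 = 1 ∧ u ^ 2 % 8 = 1) ∨ (u % 4 = 2 ∧ u ^ 2 % 8 = 4) ∨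
    (u % 4 = 0 ∧ u ^ 2 % 8 = 0) := by
  have : u % 8 = 0 ∨ u % 8 = 1 ∨ u % 8 = 2 ∨ u % 8 = 3 ∨ u % 8 = 4 ∨ u % 8 = 5 ∨ u % 8 = 6 ∨
    u % 8 = 7 := by omega
  rcases this with h | h | h | h | h | h | h | h <;>
    simp [pow_two, Int.mul_emod, h] <;> omega

/-- Completing squares: with `u = 2 (2 w - 1)`, `v = 2 z - 1`, `s = x + y - 1`, `t = x - y` the
equation defining `tquad 1 1 3 4 n` becomes `u² + 3 v² + 2 (s² + t²) = 8 n + 9`. -/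
lemma tri_iff (n : ℕ) (x y z w : ℤ) :
    (n : ℤ) = (1 : ℕ) * (x * (x - 1) / 2) + (1 : ℕ) * (y * (y - 1) / 2)
      + (3 : ℕ) * (z * (z - 1) / 2) + (4 : ℕ) * (w * (w - 1) / 2) ↔
    (2 * (2 * w - 1)) ^ 2 + 3 * (2 * z - 1) ^ 2 + 2 * ((x + y - 1) ^ 2 + (x - y) ^ 2) =
      8 * (n : ℤ) + 9 := by
  have hx := two_mul_tri x
  have hy := two_mul_tri y
  have hz := two_mul_tri z
  have hw := two_mul_tri w
  generalize x * (x - 1) / 2 = X at *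
  generalize y * (y - 1) / 2 = Y at *
  generalize z * (z - 1) / 2 = Z at *
  generalize w * (w - 1) / 2 = W at *
  push_cast
  constructor
  · intro h
    linear_combination (-8) * h - 4 * hx - 4 * hy - 12 * hz - 16 * hw
  · intro h
    refine mul_left_cancel₀ (show (8 : ℤ) ≠ 0 by norm_num) ?_
    linear_combination (-1) * h - 4 * hx - 4 * hy - 12 * hz - 16 * hw

/-- The congruence conditions on `u, v, s, t` coming from the substitution in `tri_iff` follow from
`s² + t²` being odd. -/
lemma parity_facts {u v s t M : ℤ} (hM : M % 8 = 1) (h : u ^ 2 + 3 * v ^ 2 + 2 * (s ^ 2 + t ^ 2) = M)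
    (ho : (s ^ 2 + t ^ 2) % 2 = 1) : u % 4 = 2 ∧ v % 2 = 1 ∧ (s + t) % 2 = 1 := by
  rcases sq_mod8 u with ⟨h1, h1'⟩ | ⟨h1, h1'⟩ | ⟨h1, h1'⟩ <;>
  rcases sq_mod8 v with ⟨h2, h2'⟩ | ⟨h2, h2'⟩ | ⟨h2, h2'⟩ <;>
  rcases sq_mod8 s with ⟨h3, h3'⟩ | ⟨h3, h3'⟩ | ⟨h3, h3'⟩ <;>
  rcases sq_mod8 t with ⟨h4, h4'⟩ | ⟨h4, h4'⟩ | ⟨h4, h4'⟩ <;> omega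

/-- `tquad 1 1 3 4 n` counts the representations `8 n + 9 = u² + 3 v² + 2 m` with `m = s² + t²`
odd. -/
lemma tquad_eq (n : ℕ) : (tquad 1 1 3 4 n : ℤ) = ∑ m ∈ idxT (8 * n + 9),
    (#(reps 3 (8 * n + 9 - 2 * m : ℕ)) : ℤ) * #(reps 1 m) := by
  have key : tquad 1 1 3 4 n = #((idxT (8 * n + 9)).sigma
      fun m => reps 3 (8 * n + 9 - 2 * m : ℕ) ×ˢ reps 1 m) := by
    rw [tquad, ← Nat.card_eq_finsetCard]
    refine Nat.card_congr ⟨fun p => ⟨⟨((p.1.1 + p.1.2.1 - 1) ^ 2 + (p.1.1 - p.1.2.1) ^ 2).toNat,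
      ((2 * (2 * p.1.2.2.2 - 1), 2 * p.1.2.2.1 - 1), (p.1.1 + p.1.2.1 - 1, p.1.1 - p.1.2.1))⟩, ?_⟩,
      fun q => ⟨((q.1.2.2.1 + q.1.2.2.2 + 1) / 2, (q.1.2.2.1 - q.1.2.2.2 + 1) / 2,
        (q.1.2.1.2 + 1) / 2, (q.1.2.1.1 / 2 + 1) / 2), ?_⟩, ?_, ?_⟩
    · obtain ⟨⟨x, y, z, w⟩, hp⟩ := p
      have hp1 := (tri_iff n x y z w).1 hp
      simp only [mem_sigma, mem_product, mem_reps three_pos, mem_reps one_pos, idxT, mem_filter,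
        mem_range, one_mul]
      have h0 : 0 ≤ (x + y - 1) ^ 2 + (x - y) ^ 2 := by positivity
      have h1 : 0 < (2 * (2 * w - 1)) ^ 2 + 3 * (2 * z - 1) ^ 2 := by
        have : 2 * z - 1 ≠ 0 := by omega
        positivity
      have h2 : ((x + y - 1) ^ 2 + (x - y) ^ 2) % 2 = 1 := by
        have : (x + y - 1) ^ 2 + (x - y) ^ 2 = 2 * (x ^ 2 + y ^ 2 - x - y) + 1 := by ring
        omega
      clear hp
      generalize (x + y - 1) ^ 2 + (x - y) ^ 2 = m at *
      refine ⟨⟨by omega, by omega, by omega⟩, ?_, ?_⟩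
      · omega
      · omega
    · obtain ⟨⟨m, ⟨u, v⟩, s, t⟩, hq⟩ := q
      simp only [mem_sigma, mem_product, mem_reps three_pos, mem_reps one_pos, idxT, mem_filter,
        mem_range] at hq
      obtain ⟨⟨h1, h2, h3⟩, h4, h5⟩ := hq
      have hM : u ^ 2 + 3 * v ^ 2 + 2 * (s ^ 2 + t ^ 2) = 8 * (n : ℤ) + 9 := by omega
      obtain ⟨e1, e2, e3⟩ := parity_facts (by omega) hM (by omega)
      rw [tri_iff, ← hM]
      have f1 : 2 * (2 * ((u / 2 + 1) / 2) - 1) = u := by omega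
      have f2 : 2 * ((v + 1) / 2) - 1 = v := by omega
      have f3 : (s + t + 1) / 2 + (s - t + 1) / 2 - 1 = s := by omega
      have f4 : (s + t + 1) / 2 - (s - t + 1) / 2 = t := by omega
      simp only [f1, f2, f3, f4]
    · rintro ⟨⟨x, y, z, w⟩, hp⟩
      simp only [Subtype.mk.injEq, Prod.mk.injEq]
      omega
    · rintro ⟨⟨m, ⟨u, v⟩, s, t⟩, hq⟩
      simp only [mem_sigma, mem_product, mem_reps three_pos, mem_reps one_pos, idxT, mem_filter,
        mem_range] at hq
      obtain ⟨⟨h1, h2, h3⟩, h4, h5⟩ := hq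
      have hM : u ^ 2 + 3 * v ^ 2 + 2 * (s ^ 2 + t ^ 2) = 8 * (n : ℤ) + 9 := by omega
      obtain ⟨e1, e2, e3⟩ := parity_facts (by omega) hM (by omega)
      have f1 : 2 * (2 * ((u / 2 + 1) / 2) - 1) = u := by omega
      have f2 : 2 * ((v + 1) / 2) - 1 = v := by omega
      have f3 : (s + t + 1) / 2 + (s - t + 1) / 2 - 1 = s := by omega
      have f4 : (s + t + 1) / 2 - (s - t + 1) / 2 = t := by omega
      have f5 : (s ^ 2 + t ^ 2).toNat = m := by omega
      simp only [f1, f2, f3, f4, f5]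
  rw [key, card_sigma]
  push_cast
  simp only [card_product, Nat.cast_mul]

/-- By the divisor-sum formulas for both binary forms, with `8 n + 9 - 2 m = a x` and `2 m = b y`,
the number `tquad 1 1 3 4 n` is a sum over `a x + b y = 8 n + 9`. -/
lemma tquad_eq_quadSum (n : ℕ) : (tquad 1 1 3 4 n : ℤ) =
    8 * quadSum (8 * n + 9) fun a _ b y => if b % 2 = 1 ∧ y % 4 = 2 then c3 a * c4 b else 0 := by
  rw [tquad_eq]
  have h1 : ∀ m ∈ idxT (8 * n + 9), (#(reps 3 (8 * n + 9 - 2 * m : ℕ)) : ℤ) * #(reps 1 m) =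
      8 * ∑ p ∈ (8 * n + 9 - 2 * m).divisors ×ˢ m.divisors, c3 p.1 * c4 p.2 := by
    intro m hm
    simp only [idxT, mem_filter] at hm
    rw [card_reps_three _ (by omega), card_reps_one _ hm.2.1, sum_product]
    dsimp only
    rw [← sum_mul_sum]
    ring
  rw [sum_congr rfl h1, ← mul_sum, sum_sigma']
  congr 1
  unfold quadSum
  rw [← sum_filter]
  refine sum_bij' (fun s _ => (s.2.1, (8 * n + 9 - 2 * s.1) / s.2.1, s.2.2, 2 * (s.1 / s.2.2)))
    (fun v _ => ⟨v.2.2.1 * (v.2.2.2 / 2), (v.1, v.2.2.1)⟩) ?_ ?_ ?_ ?_ ?_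
  · rintro ⟨m, a, b⟩ hs
    simp only [mem_sigma, mem_product, Nat.mem_divisors, idxT, mem_filter, mem_range] at hs
    obtain ⟨⟨h1, h2, h3⟩, ⟨⟨x, hx⟩, h4⟩, ⟨y, rfl⟩, h5⟩ := hs
    have hb : 0 < b := Nat.pos_of_ne_zero (left_ne_zero_of_mul h5)
    have hy : 0 < y := Nat.pos_of_ne_zero (right_ne_zero_of_mul h5)
    rw [hx] at h4
    have ha : 0 < a := Nat.pos_of_ne_zero (left_ne_zero_of_mul h4)
    have hx0 : 0 < x := Nat.pos_of_ne_zero (right_ne_zero_of_mul h4)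
    simp only [mem_filter, mem_quads, hx, Nat.mul_div_cancel_left _ ha, Nat.mul_div_cancel_left _ hb]
    have ho := Nat.odd_mul.1 (Nat.odd_iff.2 h2)
    have ho1 := Nat.odd_iff.1 ho.1
    have ho2 := Nat.odd_iff.1 ho.2
    refine ⟨⟨ha, hx0, hb, by omega, ?_⟩, by omega, by omega⟩
    rw [← hx, show b * (2 * y) = 2 * (b * y) by ring]; omega
  · rintro ⟨a, x, b, y⟩ hv
    simp only [mem_filter, mem_quads] at hv
    obtain ⟨⟨ha, hx, hb, hy, e⟩, h1, h2⟩ := hv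
    obtain ⟨k, rfl⟩ : ∃ k, y = 2 * k := ⟨y / 2, by omega⟩
    have hk : 0 < k := by omega
    have hax : 0 < a * x := Nat.mul_pos ha hx
    have hbk : 0 < b * k := Nat.mul_pos hb hk
    have e' : a * x + 2 * (b * k) = 8 * n + 9 := by rw [← e]; ring
    have ho : b * k % 2 = 1 := Nat.odd_iff.1
      (Nat.odd_mul.2 ⟨Nat.odd_iff.2 (by omega), Nat.odd_iff.2 (by omega)⟩)
    simp only [mem_sigma, mem_product, Nat.mem_divisors, idxT, mem_filter, mem_range,
      Nat.mul_div_cancel_left _ two_pos]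
    exact ⟨⟨by omega, ho, by omega⟩, ⟨⟨x, by omega⟩, by omega⟩, ⟨k, rfl⟩, by omega⟩
  · rintro ⟨m, a, b⟩ hs
    simp only [mem_sigma, mem_product, Nat.mem_divisors] at hs
    simp only [Nat.mul_div_cancel_left _ two_pos, Nat.mul_div_cancel' hs.2.2.1]
  · rintro ⟨a, x, b, y⟩ hv
    simp only [mem_filter, mem_quads] at hv
    obtain ⟨⟨ha, hx, hb, hy, e⟩, h1, h2⟩ := hv
    obtain ⟨k, rfl⟩ : ∃ k, y = 2 * k := ⟨y / 2, by omega⟩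
    have e' : a * x + 2 * (b * k) = 8 * n + 9 := by rw [← e]; ring
    have e2 : 8 * n + 9 - 2 * (b * k) = a * x := by omega
    simp only [Nat.mul_div_cancel_left _ two_pos, Nat.mul_div_cancel_left _ hb, e2,
      Nat.mul_div_cancel_left _ ha]
  · rintro ⟨m, a, b⟩ hs
    rfl

/-! ### The theta sum over `u² + 3 v² = M` -/

lemma reps_three_mod {u v m : ℤ} (hm : m % 8 = 1) (h : u ^ 2 + 3 * v ^ 2 = m) :
    u % 2 = 1 ∧ v % 4 = 0 := by
  rcases sq_mod8 u with ⟨h1, h1'⟩ | ⟨h1, h1'⟩ | ⟨h1, h1'⟩ <;>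
  rcases sq_mod8 v with ⟨h2, h2'⟩ | ⟨h2, h2'⟩ | ⟨h2, h2'⟩ <;> omega

lemma sq_ge_self (v : ℤ) : v ≤ v ^ 2 ∧ -v ≤ v ^ 2 := by
  constructor
  · exact Int.le_self_sq v
  · have := Int.le_self_sq (-v)
    rwa [neg_sq] at this

/-- The theta sum `∑ χ₄(u) u` over all representations `M = u² + 3v²`. -/
noncomputable def thetaU (M : ℤ) : ℤ := ∑ w ∈ reps 3 M, c4 w.1 * w.1

/-- The pairs of positive integers `(a, b)` with `a` odd and `4M = a² + 3b²`. -/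
def posPairs (M : ℕ) : Finset (ℕ × ℕ) :=
  (range (4 * M + 1) ×ˢ range (4 * M + 1)).filter fun p =>
    0 < p.1 ∧ 0 < p.2 ∧ Odd p.1 ∧ 4 * M = p.1 ^ 2 + 3 * p.2 ^ 2

lemma mem_posPairs {M a b : ℕ} :
    (a, b) ∈ posPairs M ↔ 0 < a ∧ 0 < b ∧ Odd a ∧ 4 * M = a ^ 2 + 3 * b ^ 2 := by
  simp only [posPairs, mem_filter, mem_product, mem_range, and_iff_right_iff_imp]
  rintro ⟨ha, hb, -, h⟩
  have h1 : a ≤ a ^ 2 := Nat.le_self_pow two_ne_zero a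
  have h2 : b ≤ b ^ 2 := Nat.le_self_pow two_ne_zero b
  omega

/-- Among the four sign choices of `(a, b)` exactly two satisfy `a ≡ b mod 4`, and those
correspond to representations of `M` through `a = u - 3v`, `b = u + v`. -/
lemma thetaU_eq_posPairs (M : ℕ) (hM : M % 8 = 1) :
    thetaU M = 2 * ∑ p ∈ posPairs M, c4 p.1 * p.1 := by
  set W := (reps 3 (4 * M)).filter fun w => w.1 % 2 = 1 ∧ w.1 % 4 = w.2 % 4 with hW
  have hWm : ∀ A B : ℤ, (A, B) ∈ W ↔ A ^ 2 + 3 * B ^ 2 = 4 * M ∧ A % 2 = 1 ∧ A % 4 = B % 4 := by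
    intro A B
    rw [hW, mem_filter, mem_reps three_pos]
  -- The terms in `v` cancel under `v ↦ -v`.
  have h0 : ∑ w ∈ reps 3 M, c4 w.1 * w.2 = 0 := by
    have : ∑ w ∈ reps 3 M, c4 w.1 * w.2 = ∑ w ∈ reps 3 M, c4 w.1 * -w.2 := by
      refine sum_nbij' (fun w => (w.1, -w.2)) (fun w => (w.1, -w.2)) ?_ ?_ ?_ ?_ ?_ <;>
        simp [mem_reps]
    simp only [mul_neg, sum_neg_distrib] at this
    omega
  have h1 : ∑ w ∈ W, c4 w.1 * w.1 = thetaU M := by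
    have : ∑ w ∈ W, c4 w.1 * w.1 = ∑ w ∈ reps 3 M, (c4 w.1 * w.1 - 3 * (c4 w.1 * w.2)) := by
      symm
      refine sum_nbij' (fun w => (w.1 - 3 * w.2, w.1 + w.2))
        (fun w => ((w.1 + 3 * w.2) / 4, (w.2 - w.1) / 4)) ?_ ?_ ?_ ?_ ?_
      · rintro ⟨u, v⟩ hw
        rw [mem_reps three_pos] at hw
        have := reps_three_mod (by omega) hw
        simp only [hWm]
        dsimp only at hw
        refine ⟨by rw [← hw]; ring, by omega, by omega⟩
      · rintro ⟨A, B⟩ hw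
        rw [hWm] at hw
        obtain ⟨h1, h2, h3⟩ := hw
        obtain ⟨k, hk⟩ : ∃ k, B = A + 4 * k := ⟨(B - A) / 4, by omega⟩
        subst hk
        rw [mem_reps three_pos]
        have e1 : (A + 3 * (A + 4 * k)) / 4 = A + 3 * k := by omega
        have e2 : (A + 4 * k - A) / 4 = k := by omega
        simp only [e1, e2]
        refine mul_left_cancel₀ (show (4 : ℤ) ≠ 0 by norm_num) ?_
        linear_combination h1
      · rintro ⟨u, v⟩ hw
        simp only [Prod.mk.injEq]
        omega
      · rintro ⟨A, B⟩ hw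
        rw [hWm] at hw
        simp only [Prod.mk.injEq]
        omega
      · rintro ⟨u, v⟩ hw
        rw [mem_reps three_pos] at hw
        have := reps_three_mod (by omega) hw
        have e : c4 (u - 3 * v) = c4 u := c4_congr (by omega)
        simp only [e]
        ring
    rw [this, sum_sub_distrib, ← mul_sum, h0, thetaU]
    ring
  have hneg : ∑ w ∈ W.filter (fun w => ¬ 0 < w.1), c4 w.1 * w.1 =
      ∑ w ∈ W.filter (fun w => 0 < w.1), c4 w.1 * w.1 := by
    refine sum_nbij' (fun w => (-w.1, -w.2)) (fun w => (-w.1, -w.2)) ?_ ?_ ?_ ?_ ?_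
    · rintro ⟨A, B⟩ hw
      simp only [mem_filter, hWm, neg_sq] at hw ⊢
      refine ⟨⟨hw.1.1, ?_⟩, ?_⟩ <;> omega
    · rintro ⟨A, B⟩ hw
      simp only [mem_filter, hWm, neg_sq] at hw ⊢
      refine ⟨⟨hw.1.1, ?_⟩, ?_⟩ <;> omega
    · simp
    · simp
    · rintro ⟨A, B⟩ hw
      simp only [c4_neg]
      ring
  have hpos : ∑ w ∈ W.filter (fun w => 0 < w.1), c4 w.1 * w.1 =
      ∑ p ∈ posPairs M, c4 p.1 * p.1 := by
    refine sum_nbij' (fun w => (w.1.natAbs, w.2.natAbs))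
      (fun p => ((p.1 : ℤ), if p.1 % 4 = p.2 % 4 then (p.2 : ℤ) else -p.2)) ?_ ?_ ?_ ?_ ?_
    · rintro ⟨A, B⟩ hw
      simp only [mem_filter, hWm] at hw
      rw [mem_posPairs]
      refine ⟨by omega, by omega, by rw [Nat.odd_iff]; omega, ?_⟩
      zify
      rw [sq_abs, sq_abs]
      exact hw.1.1.symm
    · rintro ⟨a, b⟩ hp
      rw [mem_posPairs] at hp
      obtain ⟨ha, hb, ho, h⟩ := hp
      simp only [mem_filter, hWm]
      have ho1 := Nat.odd_iff.1 ho
      have hb1 : b % 2 = 1 := by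
        have : Odd (b ^ 2) := by
          have h1 : Odd (a ^ 2) := ho.pow
          rw [Nat.odd_iff] at h1 ⊢
          omega
        exact Nat.odd_iff.1 ((Nat.odd_pow_iff two_ne_zero).1 this)
      refine ⟨⟨?_, by omega, by split_ifs <;> omega⟩, by omega⟩
      have : (if a % 4 = b % 4 then (b : ℤ) else -b) ^ 2 = (b : ℤ) ^ 2 := by split_ifs <;> ring
      rw [this]
      exact_mod_cast h.symm
    · rintro ⟨A, B⟩ hw
      simp only [mem_filter, hWm] at hw
      simp only [Prod.mk.injEq]
      refine ⟨by omega, ?_⟩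
      split_ifs <;> omega
    · rintro ⟨a, b⟩ hp
      simp only [Prod.mk.injEq]
      refine ⟨by omega, ?_⟩
      split_ifs <;> omega
    · rintro ⟨A, B⟩ hw
      simp only [mem_filter] at hw
      rw [Int.natAbs_of_nonneg hw.2.le]
  rw [← h1, ← sum_filter_add_sum_filter_not W (fun w => 0 < w.1), hneg, hpos]
  ring

/-- Summation over `u² + 3 v² = M` as an iterated sum over `v` and over `u² = M - 3 v²`. -/
lemma sum_reps_three (M : ℕ) (hM : M % 8 = 1) (f : ℤ → ℤ) :
    ∑ w ∈ reps 3 M, f w.1 =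
      ∑ v ∈ (Icc (-M : ℤ) M).filter (fun v => v % 4 = 0), ∑ u ∈ sqs (M - 3 * v ^ 2), f u := by
  rw [sum_sigma']
  refine sum_bij' (fun w _ => ⟨w.2, w.1⟩) (fun s _ => (s.2, s.1)) ?_ ?_ ?_ ?_ ?_
  · rintro ⟨u, v⟩ hw
    rw [mem_reps three_pos] at hw
    have := reps_three_mod (by omega) hw
    simp only [mem_sigma, mem_filter, mem_Icc, mem_sqs]
    have h1 := sq_ge_self v
    have h2 := sq_nonneg u
    dsimp only at hw
    refine ⟨⟨⟨by omega, by omega⟩, this.2⟩, by omega⟩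
  · rintro ⟨v, u⟩ hs
    simp only [mem_sigma, mem_sqs] at hs
    rw [mem_reps three_pos]
    dsimp only
    omega
  · intros; rfl
  · intros; rfl
  · intros; rfl

/-- The pairs of positive integers `(A, C)` with `A ≡ 2 mod 4` and `4AC < M`. -/
def idxU (M : ℕ) : Finset (ℕ × ℕ) :=
  (range (M + 1) ×ˢ range (M + 1)).filter fun p =>
    0 < p.1 ∧ 0 < p.2 ∧ p.1 % 4 = 2 ∧ 4 * (p.1 * p.2) < M

lemma mem_idxU {M A C : ℕ} :
    (A, C) ∈ idxU M ↔ 0 < A ∧ 0 < C ∧ A % 4 = 2 ∧ 4 * (A * C) < M := by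
  simp only [idxU, mem_filter, mem_product, mem_range, and_iff_right_iff_imp]
  rintro ⟨ha, hb, -, h⟩
  have h1 : A ≤ A * C := Nat.le_mul_of_pos_right A hb
  have h2 : C ≤ A * C := Nat.le_mul_of_pos_left C ha
  omega

/-- Summing the left side over `v` gives `x² + 3 v² = M - 4 A C`, so the number of pairs `(x, v)`
is counted by `reps 3`. -/
lemma sum_Om_gg (M : ℕ) (hM : M % 8 = 1) :
    ∑ v ∈ (Icc (-M : ℤ) M).filter (fun v => v % 4 = 0),
        ∑ w ∈ Om (M - 3 * v ^ 2), gg w.2.1 w.2.2 =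
      ∑ p ∈ idxU M, gg p.1 p.2 * #(reps 3 (M - 4 * (p.1 * p.2) : ℕ)) := by
  have hz : ∀ m : ℤ, ∑ w ∈ Om m, gg w.2.1 w.2.2 =
      ∑ w ∈ (Om m).filter (fun w => w.2.1 % 4 = 2), gg w.2.1 w.2.2 := by
    intro m
    rw [sum_filter]
    refine sum_congr rfl fun w _ => ?_
    split_ifs with h
    · rfl
    · simp [gg, h]
  simp only [hz]
  have hc : ∀ p : ℕ × ℕ, gg p.1 p.2 * #(reps 3 (M - 4 * (p.1 * p.2) : ℕ)) =
      ∑ w ∈ reps 3 (M - 4 * (p.1 * p.2) : ℕ), gg p.1 p.2 := by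
    intro p
    rw [sum_const, nsmul_eq_mul, mul_comm]
  simp only [hc]
  rw [sum_sigma', sum_sigma']
  refine sum_bij' (fun s _ => ⟨(s.2.2.1.toNat, s.2.2.2.toNat), (s.2.1, s.1)⟩)
    (fun s _ => ⟨s.2.2, (s.2.1, (s.1.1 : ℤ), (s.1.2 : ℤ))⟩) ?_ ?_ ?_ ?_ ?_
  · rintro ⟨v, x, A, C⟩ hs
    simp only [mem_sigma, mem_filter, mem_Om] at hs
    obtain ⟨-, ⟨hA, hC, h⟩, h4⟩ := hs
    lift A to ℕ using hA.le
    lift C to ℕ using hC.le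
    simp only [Int.toNat_natCast, mem_sigma, mem_idxU, mem_reps three_pos]
    have hx : 0 ≤ x ^ 2 + 3 * v ^ 2 := by positivity
    rw [mul_assoc, ← Nat.cast_mul] at h
    have : 4 * (A * C) ≠ M := by omega
    refine ⟨⟨by omega, by omega, by omega, by omega⟩, by omega⟩
  · rintro ⟨⟨A, C⟩, x, v⟩ hs
    simp only [mem_sigma, mem_idxU, mem_reps three_pos] at hs
    obtain ⟨⟨hA, hC, h4, hl⟩, h⟩ := hs
    have h2 : (A * C) % 2 = 0 := by
      rw [Nat.mul_mod, show A % 2 = 0 by omega, zero_mul, Nat.zero_mod]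
    have hm := reps_three_mod (by omega) h
    simp only [mem_sigma, mem_filter, mem_Om, mem_Icc]
    have h1 := sq_ge_self v
    have h3 := sq_nonneg x
    rw [mul_assoc, ← Nat.cast_mul]
    refine ⟨⟨⟨by omega, by omega⟩, hm.2⟩, ⟨by omega, by omega, by omega⟩, by omega⟩
  · rintro ⟨v, x, A, C⟩ hs
    simp only [mem_sigma, mem_filter, mem_Om] at hs
    simp only [Int.toNat_of_nonneg hs.2.1.1.le, Int.toNat_of_nonneg hs.2.1.2.1.le]
  · rintro ⟨⟨A, C⟩, x, v⟩ hs
    simp only [Int.toNat_natCast]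
  · rintro ⟨v, x, A, C⟩ hs
    simp only [mem_sigma, mem_filter, mem_Om] at hs
    simp only [Int.toNat_of_nonneg hs.2.1.1.le, Int.toNat_of_nonneg hs.2.1.2.1.le]

/-- The sum over `idxU` becomes a sum over `a x + b y = M` with `b = A`, `y = 4 C`, by the divisor
formula for the number of representations by `x² + 3 y²`. -/
lemma sum_idxU (M : ℕ) (hM : M % 8 = 1) :
    ∑ p ∈ idxU M, gg p.1 p.2 * #(reps 3 (M - 4 * (p.1 * p.2) : ℕ)) =
      2 * quadSum M fun a _ b y => if b % 4 = 2 ∧ y % 4 = 0 then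
        c3 a * (c4 (b / 2) * if y % 8 = 0 then 1 else -1) else 0 := by
  have h1 : ∀ p ∈ idxU M, gg p.1 p.2 * #(reps 3 (M - 4 * (p.1 * p.2) : ℕ)) =
      2 * ∑ a ∈ (M - 4 * (p.1 * p.2)).divisors, c3 a * gg p.1 p.2 := by
    rintro ⟨A, C⟩ hp
    rw [mem_idxU] at hp
    rw [card_reps_three _ (by dsimp only; omega), ← sum_mul]
    ring
  rw [sum_congr rfl h1, ← mul_sum, sum_sigma']
  congr 1
  unfold quadSum
  rw [← sum_filter]
  refine sum_bij' (fun s _ => (s.2, (M - 4 * (s.1.1 * s.1.2)) / s.2, s.1.1, 4 * s.1.2))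
    (fun v _ => ⟨(v.2.2.1, v.2.2.2 / 4), v.1⟩) ?_ ?_ ?_ ?_ ?_
  · rintro ⟨⟨A, C⟩, a⟩ hs
    simp only [mem_sigma, mem_idxU, Nat.mem_divisors] at hs
    obtain ⟨⟨h1, h2, h3, h4⟩, ⟨x, hx⟩, h5⟩ := hs
    rw [hx] at h5
    have ha : 0 < a := Nat.pos_of_ne_zero (left_ne_zero_of_mul h5)
    have hx0 : 0 < x := Nat.pos_of_ne_zero (right_ne_zero_of_mul h5)
    simp only [mem_filter, mem_quads, hx, Nat.mul_div_cancel_left _ ha]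
    refine ⟨⟨ha, hx0, h1, by omega, ?_⟩, by omega, by omega⟩
    rw [← hx, show A * (4 * C) = 4 * (A * C) by ring]; omega
  · rintro ⟨a, x, b, y⟩ hv
    simp only [mem_filter, mem_quads] at hv
    obtain ⟨⟨ha, hx, hb, hy, e⟩, h1, h2⟩ := hv
    obtain ⟨k, rfl⟩ : ∃ k, y = 4 * k := ⟨y / 4, by omega⟩
    have hax : 0 < a * x := Nat.mul_pos ha hx
    have e' : a * x + 4 * (b * k) = M := by rw [← e]; ring
    simp only [mem_sigma, mem_idxU, Nat.mem_divisors, Nat.mul_div_cancel_left _ four_pos]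
    exact ⟨⟨hb, by omega, by omega, by omega⟩, ⟨x, by omega⟩, by omega⟩
  · rintro ⟨⟨A, C⟩, a⟩ hs
    simp only [Nat.mul_div_cancel_left _ four_pos]
  · rintro ⟨a, x, b, y⟩ hv
    simp only [mem_filter, mem_quads] at hv
    obtain ⟨⟨ha, hx, hb, hy, e⟩, h1, h2⟩ := hv
    obtain ⟨k, rfl⟩ : ∃ k, y = 4 * k := ⟨y / 4, by omega⟩
    have e' : a * x + 4 * (b * k) = M := by rw [← e]; ring
    have e2 : M - 4 * (b * k) = a * x := by omega
    simp only [Nat.mul_div_cancel_left _ four_pos, e2, Nat.mul_div_cancel_left _ ha]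
  · rintro ⟨⟨A, C⟩, a⟩ hs
    simp only [mem_sigma, mem_idxU] at hs
    have hA : (A : ℤ) % 4 = 2 := by omega
    have h8 : (((4 * C : ℕ) : ℤ) % 8 = 0) ↔ ((C : ℤ) % 2 = 0) := by omega
    simp only [gg, if_pos hA, h8]

/-- The theta sum `thetaU` as a sum over `a x + b y = M`: the identity `uspensky` with
`m = M - 3 v²`, summed over `v`. -/
lemma thetaU_eq (M : ℕ) (hM : M % 8 = 1) :
    thetaU M = 2 * ∑ d ∈ M.divisors, c3 d +
      8 * quadSum M fun a _ b y => if b % 4 = 2 ∧ y % 4 = 0 then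
        c3 a * (c4 (b / 2) * if y % 8 = 0 then 1 else -1) else 0 := by
  have h1 : ∀ v ∈ (Icc (-M : ℤ) M).filter (fun v => v % 4 = 0),
      ∑ u ∈ sqs (M - 3 * v ^ 2), c4 u * u =
        ∑ u ∈ sqs (M - 3 * v ^ 2), 1 + 4 * ∑ w ∈ Om (M - 3 * v ^ 2), gg w.2.1 w.2.2 := by
    intro v hv
    rw [mem_filter] at hv
    have : (M - 3 * v ^ 2 : ℤ) % 8 = 1 := by
      rcases sq_mod8 v with h | h | h <;> omega
    rw [uspensky this, card_eq_sum_ones]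
    push_cast
    rfl
  rw [thetaU, sum_reps_three M hM fun u => c4 u * u, sum_congr rfl h1, sum_add_distrib,
    ← sum_reps_three M hM fun _ => 1, ← mul_sum, sum_Om_gg M hM, sum_idxU M hM,
    ← card_reps_three M (by omega), card_eq_sum_ones]
  push_cast
  ring

/-! ### Evaluation of the Eisenstein part -/

/-- The decomposition into an Eisenstein part and a cuspidal part. In `main_identity` the two
branches of `tgt` contribute `2 tquad` and `thetaU - 2 ∑ χ₃(d)`. -/
lemma two_tquad (n : ℕ) : 2 * (tquad 1 1 3 4 n : ℤ) =
    ∑ p ∈ (8 * n + 9).divisorsAntidiagonal, (p.1 : ℤ) * (3 * c12 p.2 - c12 p.1)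
      - thetaU (8 * n + 9 : ℕ) := by
  have hM : (8 * n + 9) % 8 = 1 := by omega
  have hmain := main_identity (8 * n + 9) hM
  rw [thetaU_eq _ hM, tquad_eq_quadSum]
  have : quadSum (8 * n + 9) (fun a _ b y => c3 a * tgt b y) =
      4 * quadSum (8 * n + 9) (fun a _ b y => if b % 2 = 1 ∧ y % 4 = 2 then c3 a * c4 b else 0) +
      2 * quadSum (8 * n + 9) (fun a _ b y => if b % 4 = 2 ∧ y % 4 = 0 then
        c3 a * (c4 (b / 2) * if y % 8 = 0 then 1 else -1) else 0) := by
    unfold quadSum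
    rw [mul_sum, mul_sum, ← sum_add_distrib]
    refine sum_congr rfl fun v _ => ?_
    unfold tgt
    dsimp only
    split_ifs <;> first | omega | ring
  rw [this] at hmain
  linear_combination hmain

lemma c12_mul (a b : ℤ) : c12 (a * b) = c12 a * c12 b := by
  unfold c12
  rw [c3_mul, c4_mul]
  ring

lemma c12_three_mul (a : ℤ) : c12 (3 * a) = 0 := by
  have : c3 (3 * a) = 0 := by simp [c3]
  rw [c12, this, zero_mul]

/-- For odd `d` the symbol `(3/d)` equals `χ₁₂(d)`: both depend on `d` modulo 12 only. -/
lemma c12_eq_jacobi {d : ℕ} (hd : d % 2 = 1) : c12 d = jacobiSym 3 d := by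
  rw [show (3 : ℤ) = ((3 : ℕ) : ℤ) by norm_num, jacobiSym.mod_right _ (Nat.odd_iff.2 hd)]
  have hc : c12 d = c12 (d % 12 : ℕ) := by
    unfold c12
    rw [c3_congr (b := ((d % 12 : ℕ) : ℤ)) (by omega), c4_congr (b := ((d % 12 : ℕ) : ℤ)) (by omega)]
  rw [hc]
  have : d % 12 = 1 ∨ d % 12 = 3 ∨ d % 12 = 5 ∨ d % 12 = 7 ∨ d % 12 = 9 ∨ d % 12 = 11 := by omega
  rw [show 4 * ((3 : ℕ) : ℤ).natAbs = 12 from rfl]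
  generalize d % 12 = r at this ⊢
  rcases this with rfl | rfl | rfl | rfl | rfl | rfl <;> norm_num [c12, c3, c4]

/-- If `f` vanishes when its second argument is divisible by 3, then all factors 3 of `3 n` go to
the first argument. -/
lemma sum_three_step (n : ℕ) (hn : 0 < n) (f : ℕ → ℕ → ℤ) (hf : ∀ e x, f e (3 * x) = 0) (k : ℤ)
    (hk : ∀ e x, f (3 * e) x = k * f e x)  :
    ∑ p ∈ (3 * n).divisorsAntidiagonal, f p.1 p.2 = k * ∑ p ∈ n.divisorsAntidiagonal, f p.1 p.2 := by
  have h0 : ∀ m : ℕ, ∑ p ∈ m.divisorsAntidiagonal, f p.1 p.2 =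
      ∑ p ∈ m.divisorsAntidiagonal.filter (fun p => ¬ 3 ∣ p.2), f p.1 p.2 := by
    intro m
    rw [sum_filter]
    refine sum_congr rfl fun p _ => ?_
    split_ifs with h
    · obtain ⟨x, hx⟩ := h
      rw [hx, hf]
    · rfl
  rw [h0, h0, mul_sum]
  refine sum_nbij' (fun p => (p.1 / 3, p.2)) (fun p => (3 * p.1, p.2)) ?_ ?_ ?_ ?_ ?_
  · rintro ⟨e, x⟩ hp
    simp only [mem_filter, Nat.mem_divisorsAntidiagonal] at hp ⊢
    obtain ⟨⟨h1, h2⟩, h3⟩ := hp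
    have : 3 ∣ e := (Nat.Coprime.dvd_of_dvd_mul_right
      ((Nat.Prime.coprime_iff_not_dvd Nat.prime_three).2 h3) ⟨n, h1⟩)
    obtain ⟨k, rfl⟩ := this
    rw [Nat.mul_div_cancel_left _ three_pos]
    refine ⟨⟨Nat.eq_of_mul_eq_mul_left three_pos (by rw [← h1]; ring), hn.ne'⟩, h3⟩
  · rintro ⟨e, x⟩ hp
    simp only [mem_filter, Nat.mem_divisorsAntidiagonal] at hp ⊢
    refine ⟨⟨by rw [← hp.1.1]; ring, by omega⟩, hp.2⟩
  · rintro ⟨e, x⟩ hp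
    simp only [mem_filter, Nat.mem_divisorsAntidiagonal] at hp
    obtain ⟨⟨h1, h2⟩, h3⟩ := hp
    have : 3 ∣ e := (Nat.Coprime.dvd_of_dvd_mul_right
      ((Nat.Prime.coprime_iff_not_dvd Nat.prime_three).2 h3) ⟨n, h1⟩)
    simp only [Nat.mul_div_cancel' this]
  · rintro ⟨e, x⟩ hp
    simp only [Nat.mul_div_cancel_left _ three_pos]
  · rintro ⟨e, x⟩ hp
    simp only [mem_filter, Nat.mem_divisorsAntidiagonal] at hp
    obtain ⟨⟨h1, h2⟩, h3⟩ := hp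
    have : 3 ∣ e := (Nat.Coprime.dvd_of_dvd_mul_right
      ((Nat.Prime.coprime_iff_not_dvd Nat.prime_three).2 h3) ⟨n, h1⟩)
    obtain ⟨k, rfl⟩ := this
    simp only [Nat.mul_div_cancel_left _ three_pos, hk]

lemma sum_three_pow (n : ℕ) (hn : 0 < n) (f : ℕ → ℕ → ℤ) (hf : ∀ e x, f e (3 * x) = 0) (k : ℤ)
    (hk : ∀ e x, f (3 * e) x = k * f e x) (β : ℕ) :
    ∑ p ∈ (3 ^ β * n).divisorsAntidiagonal, f p.1 p.2 =
      k ^ β * ∑ p ∈ n.divisorsAntidiagonal, f p.1 p.2 := by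
  induction β with
  | zero => simp
  | succ b ih =>
    rw [pow_succ', mul_assoc, sum_three_step _ (by positivity) f hf k hk, ih]
    ring

lemma c12_sq {d : ℕ} (h2 : d % 2 = 1) (h3 : ¬ 3 ∣ d) : c12 d * c12 d = 1 := by
  unfold c12 c3 c4
  split_ifs <;> omega

/-- The divisor sum of `two_tquad`. As `χ₁₂(3) = 0`, one of its two halves is multiplied by `3` for
each factor 3 and the other is unchanged; for the coprime part, `χ₁₂(d) χ₁₂(n₁/d) = χ₁₂(n₁)`. -/
lemma eisenstein_sum (β n₁ : ℕ) (h2 : n₁ % 2 = 1) (h3 : ¬ 3 ∣ n₁) :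
    ∑ p ∈ (3 ^ β * n₁).divisorsAntidiagonal, (p.1 : ℤ) * (3 * c12 p.2 - c12 p.1) =
      (3 ^ (β + 1) * c12 n₁ - 1) * ∑ d ∈ n₁.divisors, (d : ℤ) * c12 d := by
  have hn : 0 < n₁ := by omega
  have hA : ∑ p ∈ (3 ^ β * n₁).divisorsAntidiagonal, (p.1 : ℤ) * c12 p.2 =
      3 ^ β * ∑ p ∈ n₁.divisorsAntidiagonal, (p.1 : ℤ) * c12 p.2 := by
    refine sum_three_pow n₁ hn (fun e x => (e : ℤ) * c12 x) ?_ 3 ?_ β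
    · intro e x
      push_cast
      rw [c12_three_mul, mul_zero]
    · intro e x
      push_cast
      ring
  have hA' : ∑ p ∈ n₁.divisorsAntidiagonal, (p.1 : ℤ) * c12 p.2 =
      c12 n₁ * ∑ p ∈ n₁.divisorsAntidiagonal, (p.1 : ℤ) * c12 p.1 := by
    rw [mul_sum]
    refine sum_congr rfl ?_
    rintro ⟨e, x⟩ hp
    rw [Nat.mem_divisorsAntidiagonal] at hp
    obtain ⟨rfl, -⟩ := hp
    dsimp only at h2 h3 ⊢
    have he : c12 e * c12 e = 1 :=
      c12_sq (Nat.odd_iff.1 (Nat.odd_mul.1 (Nat.odd_iff.2 h2)).1) fun h => h3 (h.mul_right x)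
    rw [Nat.cast_mul, c12_mul]
    linear_combination (-(e : ℤ) * c12 x) * he
  have hB : ∑ p ∈ (3 ^ β * n₁).divisorsAntidiagonal, (p.1 : ℤ) * c12 p.1 =
      ∑ p ∈ n₁.divisorsAntidiagonal, (p.1 : ℤ) * c12 p.1 := by
    have hs : ∀ m : ℕ, ∑ p ∈ m.divisorsAntidiagonal, (p.1 : ℤ) * c12 p.1 =
        ∑ p ∈ m.divisorsAntidiagonal, (p.2 : ℤ) * c12 p.2 := by
      intro m
      rw [Nat.sum_divisorsAntidiagonal (f := fun e _ => (e : ℤ) * c12 e),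
        Nat.sum_divisorsAntidiagonal' (f := fun _ x => (x : ℤ) * c12 x)]
    rw [hs, hs, sum_three_pow n₁ hn (fun _ x => (x : ℤ) * c12 x) ?_ 1 ?_ β, one_pow, one_mul]
    · intro e x
      push_cast
      rw [c12_three_mul, mul_zero]
    · intro e x
      rw [one_mul]
  have hD : ∑ p ∈ n₁.divisorsAntidiagonal, (p.1 : ℤ) * c12 p.1 =
      ∑ d ∈ n₁.divisors, (d : ℤ) * c12 d :=
    Nat.sum_divisorsAntidiagonal (f := fun e _ => (e : ℤ) * c12 e)
  simp only [mul_sub, sum_sub_distrib]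
  have hE : ∑ p ∈ (3 ^ β * n₁).divisorsAntidiagonal, (p.1 : ℤ) * (3 * c12 p.2) =
      3 * ∑ p ∈ (3 ^ β * n₁).divisorsAntidiagonal, (p.1 : ℤ) * c12 p.2 := by
    rw [mul_sum]
    exact sum_congr rfl fun _ _ => by ring
  rw [hE, hA, hA', hB, hD]
  ring

lemma neg_one_pow_eq_c4 {a : ℕ} (ha : a % 2 = 1) : (-1 : ℤ) ^ ((a - 1) / 2) = c4 a := by
  unfold c4
  rcases Nat.even_or_odd ((a - 1) / 2) with h | h
  · rw [h.neg_one_pow, if_pos (by rw [Nat.even_iff] at h; omega)]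
  · rw [h.neg_one_pow, if_neg (by rw [Nat.odd_iff] at h; omega),
      if_pos (by rw [Nat.odd_iff] at h; omega)]

/-- The finitely supported sum in the statement is a sum over `posPairs (8 n + 9)`. -/
lemma finsum_eq (n : ℕ) :
    ∑ᶠ (a : ℕ) (b : ℕ) (_ : 0 < a ∧ 0 < b ∧ Odd a ∧ 4 * (8 * n + 9) = a ^ 2 + 3 * b ^ 2),
      (-1 : ℚ) ^ ((a - 1) / 2) * a = ((∑ p ∈ posPairs (8 * n + 9), c4 p.1 * p.1 : ℤ) : ℚ) := by
  classical
  set M := 8 * n + 9 with hM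
  have hb : ∀ a b : ℕ, (0 < a ∧ 0 < b ∧ Odd a ∧ 4 * M = a ^ 2 + 3 * b ^ 2) →
      a ∈ range (4 * M + 1) ∧ b ∈ range (4 * M + 1) := by
    intro a b h
    rw [← mem_posPairs, posPairs, mem_filter, mem_product] at h
    exact h.1
  have h1 : ∀ a : ℕ, ∑ᶠ (b : ℕ) (_ : 0 < a ∧ 0 < b ∧ Odd a ∧ 4 * M = a ^ 2 + 3 * b ^ 2),
      (-1 : ℚ) ^ ((a - 1) / 2) * a = ∑ b ∈ range (4 * M + 1),
        if 0 < a ∧ 0 < b ∧ Odd a ∧ 4 * M = a ^ 2 + 3 * b ^ 2 then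
          (-1 : ℚ) ^ ((a - 1) / 2) * a else 0 := by
    intro a
    simp only [finsum_eq_if]
    refine finsum_eq_sum_of_support_subset _ ?_
    intro b h
    rw [Function.mem_support, ne_eq, ite_eq_right_iff, Classical.not_imp] at h
    exact mem_coe.2 (hb a b h.1).2
  simp only [h1]
  rw [finsum_eq_sum_of_support_subset (s := range (4 * M + 1))]
  · rw [posPairs, sum_filter, sum_product]
    push_cast
    refine sum_congr rfl fun a _ => sum_congr rfl fun b _ => ?_
    split_ifs with h
    · rw [← neg_one_pow_eq_c4 (Nat.odd_iff.1 h.2.2.1)]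
      push_cast
      rfl
    · rfl
  · intro a h
    rw [Function.mem_support] at h
    obtain ⟨b, -, hne⟩ := exists_ne_zero_of_sum_ne_zero h
    rw [ne_eq, ite_eq_right_iff, Classical.not_imp] at hne
    exact mem_coe.2 (hb a b hne.1).1

theorem stmt_9 (n : ℕ) (hn : 0 < n) (β n₁ : ℕ) (hn₁ : 0 < n₁) (h3 : ¬ 3 ∣ n₁)
    (hfac : 8 * n + 9 = 3 ^ β * n₁) :
    (tquad 1 1 3 4 n : ℚ) =
      1 / 2 * ((3 : ℚ) ^ (β + 1) * jacobiSym 3 n₁ - 1) *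
          ∑ d ∈ n₁.divisors, (d : ℚ) * jacobiSym 3 d -
        ∑ᶠ (a : ℕ) (b : ℕ)
          (_ : 0 < a ∧ 0 < b ∧ Odd a ∧ 4 * (8 * n + 9) = a ^ 2 + 3 * b ^ 2),
          (-1 : ℚ) ^ ((a - 1) / 2) * a := by
  have hodd : Odd n₁ := by
    have h : Odd (3 ^ β * n₁) := by rw [← hfac, Nat.odd_iff]; omega
    exact (Nat.odd_mul.1 h).2
  have hJ : ∀ d ∈ n₁.divisors, (d : ℚ) * jacobiSym 3 d = ((d * c12 d : ℤ) : ℚ) := by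
    intro d hd
    rw [Int.cast_mul, c12_eq_jacobi (Nat.odd_iff.1 (hodd.of_dvd_nat (Nat.dvd_of_mem_divisors hd)))]
    rfl
  have h := two_tquad n
  rw [thetaU_eq_posPairs _ (by omega)] at h
  rw [finsum_eq, sum_congr rfl hJ, ← c12_eq_jacobi (Nat.odd_iff.1 hodd), ← Int.cast_sum]
  rw [show (8 * n + 9).divisorsAntidiagonal = (3 ^ β * n₁).divisorsAntidiagonal by rw [hfac],
    eisenstein_sum β n₁ (Nat.odd_iff.1 hodd) h3] at h
  have hq := congrArg (Int.cast : ℤ → ℚ) h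
  push_cast at hq ⊢
  linear_combination hq / 2
end

section
/- Let n be a positive integer. Then t(1,1,3,4;n) = N(1,1,3,4; 8n+9) − N(1,1,4,12; 8n+9). -/
/-!
Completing the square, `8 * (x(x-1)/2) = (2x-1)² - 1`, identifies the representations counted by
`tquad 1 1 3 4 n` with the representations `8n+9 = x² + y² + 3z² + 4w²` in which all four variables
are odd. Modulo `8`, a representation with `z` odd forces `x² + y² + 4w² ≡ 6`, hence `x`, `y`, `w`
are odd too (`odd_of_rep`). The representations with `z` even, `z = 2z'`, are those of `8n+9` by
`x² + y² + 4w² + 12z'²`. So the solution set of the form `(1,1,3,4)` is the disjoint union of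
injective copies of the two other solution sets, and all of these are finite.
-/

open scoped BigOperators

lemma eight_mul_tri (x : ℤ) : 8 * (x * (x - 1) / 2) = (2 * x - 1) ^ 2 - 1 := by
  have h : 2 * (x * (x - 1) / 2) = x * (x - 1) :=
    Int.mul_ediv_cancel' (Int.even_mul_pred_self x).two_dvd
  linear_combination 4 * h

/-- The parity step: in a representation of a number `≡ 1 mod 8` by `x² + y² + 3z² + 4w²`, if `z`
is odd then so are the other variables. -/
lemma odd_of_rep {k x y z w : ℤ} (h : 8 * k + 9 = x ^ 2 + y ^ 2 + 3 * z ^ 2 + 4 * w ^ 2)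
    (hz : Odd z) : Odd x ∧ Odd y ∧ Odd w := by
  have key : ∀ a b c d : ZMod 8, a ^ 2 + b ^ 2 + 3 * (2 * c + 1) ^ 2 + 4 * d ^ 2 = 1 →
      4 * a = 4 ∧ 4 * b = 4 ∧ 4 * d = 4 := by decide
  obtain ⟨c, rfl⟩ := hz
  have h8 : ((8 * k + 9 : ℤ) : ZMod 8) = 1 := by
    push_cast
    rw [show (8 : ZMod 8) = 0 from rfl, show (9 : ZMod 8) = 1 from rfl]
    ring
  have hk := key x y c w (by rw [h] at h8; push_cast at h8; exact h8)
  -- `4 * a = 4` in `ZMod 8` says exactly that `a` is odd.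
  have conv : ∀ a : ℤ, 4 * (a : ZMod 8) = 4 → Odd a := by
    intro a ha
    have : ((4 * a : ℤ) : ZMod 8) = ((4 : ℤ) : ZMod 8) := by push_cast; exact ha
    rw [ZMod.intCast_eq_intCast_iff_dvd_sub] at this
    rw [Int.odd_iff]
    push_cast at this
    omega
  exact ⟨conv _ hk.1, conv _ hk.2.1, conv _ hk.2.2⟩

lemma finite_rep (m : ℤ) : {p : ℤ × ℤ × ℤ × ℤ |
    m = p.1 ^ 2 + p.2.1 ^ 2 + 3 * p.2.2.1 ^ 2 + 4 * p.2.2.2 ^ 2}.Finite := by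
  refine (Set.finite_Icc ((-m, -m, -m, -m) : ℤ × ℤ × ℤ × ℤ) (m, m, m, m)).subset ?_
  rintro ⟨x, y, z, w⟩ h
  simp only [Set.mem_ofPred_eq] at h
  have bound : ∀ a : ℤ, a ^ 2 ≤ m → -m ≤ a ∧ a ≤ m := fun a ha =>
    ⟨by linarith [Int.le_self_sq (-a), neg_sq a], by linarith [Int.le_self_sq a]⟩
  have hx := bound x (by nlinarith)
  have hy := bound y (by nlinarith)
  have hz := bound z (by nlinarith)
  have hw := bound w (by nlinarith)
  exact ⟨⟨hx.1, hy.1, hz.1, hw.1⟩, ⟨hx.2, hy.2, hz.2, hw.2⟩⟩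

theorem stmt_10 (n : ℕ) (hn : 0 < n) :
    (tquad 1 1 3 4 n : ℤ) = Nquad 1 1 3 4 (8 * n + 9) - Nquad 1 1 4 12 (8 * n + 9) := by
  let A : Set (ℤ × ℤ × ℤ × ℤ) := {p | (n : ℤ) = (1 : ℕ) * (p.1 * (p.1 - 1) / 2)
    + (1 : ℕ) * (p.2.1 * (p.2.1 - 1) / 2) + (3 : ℕ) * (p.2.2.1 * (p.2.2.1 - 1) / 2)
    + (4 : ℕ) * (p.2.2.2 * (p.2.2.2 - 1) / 2)}
  let B : Set (ℤ × ℤ × ℤ × ℤ) := {p | ((8 * n + 9 : ℕ) : ℤ) = (1 : ℕ) * p.1 ^ 2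
    + (1 : ℕ) * p.2.1 ^ 2 + (4 : ℕ) * p.2.2.1 ^ 2 + (12 : ℕ) * p.2.2.2 ^ 2}
  let S : Set (ℤ × ℤ × ℤ × ℤ) := {p | ((8 * n + 9 : ℕ) : ℤ) = (1 : ℕ) * p.1 ^ 2
    + (1 : ℕ) * p.2.1 ^ 2 + (3 : ℕ) * p.2.2.1 ^ 2 + (4 : ℕ) * p.2.2.2 ^ 2}
  change (A.ncard : ℤ) = S.ncard - B.ncard
  let f : ℤ × ℤ × ℤ × ℤ → ℤ × ℤ × ℤ × ℤ :=
    fun p => (2 * p.1 - 1, 2 * p.2.1 - 1, 2 * p.2.2.1 - 1, 2 * p.2.2.2 - 1)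
  let g : ℤ × ℤ × ℤ × ℤ → ℤ × ℤ × ℤ × ℤ := fun p => (p.1, p.2.1, 2 * p.2.2.2, p.2.2.1)
  have hf : f.Injective := by
    rintro ⟨x, y, z, w⟩ ⟨x', y', z', w'⟩ h
    simp only [f, Prod.mk.injEq] at h ⊢
    omega
  have hg : g.Injective := by
    rintro ⟨x, y, z, w⟩ ⟨x', y', z', w'⟩ h
    simp only [g, Prod.mk.injEq] at h ⊢
    omega
  have hS : S.Finite := by simpa [S] using finite_rep (8 * n + 9)
  have hU : S = f '' A ∪ g '' B := by
    ext ⟨x, y, z, w⟩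
    constructor
    · intro h
      simp only [S, Set.mem_ofPred_eq] at h
      push_cast at h
      rcases Int.even_or_odd' z with ⟨c, rfl | rfl⟩
      · right
        refine ⟨(x, y, w, c), ?_, rfl⟩
        simp only [B, Set.mem_ofPred_eq]
        push_cast
        linear_combination h
      · left
        obtain ⟨⟨a, rfl⟩, ⟨b, rfl⟩, ⟨d, rfl⟩⟩ :=
          odd_of_rep (k := n) (x := x) (y := y) (w := w) (by linear_combination h) ⟨c, rfl⟩
        refine ⟨(a + 1, b + 1, c + 1, d + 1), ?_, ?_⟩
        · simp only [A, Set.mem_ofPred_eq]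
          have ha := eight_mul_tri (a + 1)
          have hb := eight_mul_tri (b + 1)
          have hc := eight_mul_tri (c + 1)
          have hd := eight_mul_tri (d + 1)
          push_cast
          linarith
        · simp only [f, Prod.mk.injEq]
          omega
    · rintro (⟨⟨a, b, c, d⟩, h, he⟩ | ⟨⟨a, b, c, d⟩, h, he⟩)
      · rw [← he]
        simp only [A, Set.mem_ofPred_eq] at h
        simp only [f, S, Set.mem_ofPred_eq]
        push_cast at h ⊢
        linarith [eight_mul_tri a, eight_mul_tri b, eight_mul_tri c, eight_mul_tri d]
      · rw [← he]
        simp only [B, Set.mem_ofPred_eq] at h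
        simp only [g, S, Set.mem_ofPred_eq]
        push_cast at h ⊢
        linear_combination h
  -- The two images are separated by the parity of the third coordinate.
  have hD : Disjoint (f '' A) (g '' B) := by
    rw [Set.disjoint_left]
    rintro _ ⟨⟨a, b, c, d⟩, -, rfl⟩ ⟨⟨a', b', c', d'⟩, -, he⟩
    simp only [f, g, Prod.mk.injEq] at he
    omega
  have hcard : S.ncard = A.ncard + B.ncard := by
    rw [hU] at hS
    rw [hU, Set.ncard_union_eq hD (hS.subset Set.subset_union_left)
      (hS.subset Set.subset_union_right), Set.ncard_image_of_injective _ hf,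
      Set.ncard_image_of_injective _ hg]
  rw [hcard]
  push_cast
  ring
end
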